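/- An element (γ, s, t) with γ = (γ₁ ≥ γ₂ ≥ γ₃ ≥ 0) ∈ ℝ³, s = (s₁ ≥ s₂ ≥ 0) ∈ ℝ², and t ∈ ℝ, t ≥ 0, belongs to T(2,1) if and only if the following inequalities hold: γ₁ ≥ s₁, γ₁ ≥ t, γ₂ ≥ s₂, γ₃ ≤ s₁; γ₁ + γ₂ ≥ s₁ + t, γ₁ + γ₃ ≥ s₂ + t, γ₁ − γ₃ ≥ |s₂ − t|, γ₁ − γ₂ ≥ −s₁ + t; γ₁ + γ₂ + γ₃ ≥ s₁ + s₂ + t, γ₁ + γ₂ − γ₃ ≥ s₁ − s₂ + t, γ₁ + γ₂ − γ₃ ≥ s₁ + s₂ − t, γ₁ − γ₂ + γ₃ ≥ −s₁ + s₂ + t, γ₁ − γ₂ − γ₃ ≥ −s₁ + s₂ − t, and γ₁ − γ₂ − γ₃ ≥ −s₁ − s₂ + t. -/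

import Mathlib

open Matrix

/-- Eigenvalues of a (Hermitian) complex matrix, listed in decreasing order. -/
noncomputable def eigVec {k : ℕ} (X : Matrix (Fin k) (Fin k) ℂ) (hX : X.IsHermitian) :
    Fin k → ℝ :=
  fun i => hX.eigenvalues (Tuple.sort hX.eigenvalues i.rev)

/-- The `i`-th (0-based) singular value of a rectangular complex matrix:
the square root of the `i`-th largest eigenvalue of `Y * Yᴴ` (and `0` for `i ≥ a`). -/
noncomputable def sval {a b : ℕ} (Y : Matrix (Fin a) (Fin b) ℂ) (i : ℕ) : ℝ :=
  if h : i < a then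
    Real.sqrt (eigVec (Y * Yᴴ) (Matrix.isHermitian_mul_conjTranspose_self Y) ⟨i, h⟩)
  else 0

/-- The Horn cone `Horn(k)`. -/
def Horn (k : ℕ) : Set ((Fin k → ℝ) × (Fin k → ℝ) × (Fin k → ℝ)) :=
  { v | ∃ (X Y : Matrix (Fin k) (Fin k) ℂ) (hX : X.IsHermitian) (hY : Y.IsHermitian),
      v.1 = eigVec X hX ∧ v.2.1 = eigVec Y hY ∧ v.2.2 = eigVec (X + Y) (hX.add hY) }

/-- The Littlewood–Richardson cone `LR(m,n)`. -/
def LRcone (m n : ℕ) : Set ((Fin (m + n) → ℝ) × (Fin m → ℝ) × (Fin n → ℝ)) :=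
  { v | ∃ (M : Matrix (Fin (m + n)) (Fin (m + n)) ℂ) (hM : M.IsHermitian),
      v.1 = eigVec M hM ∧
      v.2.1 = eigVec (M.submatrix (Fin.castAdd n) (Fin.castAdd n))
        (hM.submatrix (Fin.castAdd n)) ∧
      v.2.2 = eigVec (M.submatrix (Fin.natAdd m) (Fin.natAdd m))
        (hM.submatrix (Fin.natAdd m)) }

/-- Top-left `p × p` block. -/
def blockTL (p q : ℕ) (X : Matrix (Fin (p + q)) (Fin (p + q)) ℂ) : Matrix (Fin p) (Fin p) ℂ :=
  X.submatrix (Fin.castAdd q) (Fin.castAdd q)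

/-- Top-right `p × q` block. -/
def blockTR (p q : ℕ) (X : Matrix (Fin (p + q)) (Fin (p + q)) ℂ) : Matrix (Fin p) (Fin q) ℂ :=
  X.submatrix (Fin.castAdd q) (Fin.natAdd p)

/-- Bottom-left `q × p` block. -/
def blockBL (p q : ℕ) (X : Matrix (Fin (p + q)) (Fin (p + q)) ℂ) : Matrix (Fin q) (Fin p) ℂ :=
  X.submatrix (Fin.natAdd p) (Fin.castAdd q)

/-- Bottom-right `q × q` block. -/
def blockBR (p q : ℕ) (X : Matrix (Fin (p + q)) (Fin (p + q)) ℂ) : Matrix (Fin q) (Fin q) ℂ :=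
  X.submatrix (Fin.natAdd p) (Fin.natAdd p)

/-- `λ* = (−λ_k, …, −λ_1)`. -/
def starVec {k : ℕ} (x : Fin k → ℝ) : Fin k → ℝ := fun i => -x i.rev

/-- `ŝ^{p,q} = (s₁, …, s_q, 0, …, 0, −s_q, …, −s₁) ∈ ℝ^{p+q}` (with `p − q` middle zeros). -/
noncomputable def hatPQ (p q : ℕ) (s : Fin q → ℝ) : Fin (p + q) → ℝ :=
  fun i =>
    if h : (i : ℕ) < q then s ⟨i, h⟩
    else if h' : (i : ℕ) < p then 0
    else -s ⟨p + q - 1 - i, by have := i.isLt; omega⟩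

/-- The cone `A(p,q)`: pairs `(e(X), s(X₁₂))` for `X` Hermitian of size `p+q`. -/
def coneA (p q : ℕ) : Set ((Fin (p + q) → ℝ) × (Fin q → ℝ)) :=
  { v | ∃ (X : Matrix (Fin (p + q)) (Fin (p + q)) ℂ) (hX : X.IsHermitian),
      v.1 = eigVec X hX ∧ ∀ i : Fin q, v.2 i = sval (blockTR p q X) (i : ℕ) }

/-- The cone `S(p,q)`: triples `(s(X), s(X₁₂), s(X₂₁))`. -/
def coneS (p q : ℕ) : Set ((Fin (p + q) → ℝ) × (Fin q → ℝ) × (Fin q → ℝ)) :=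
  { v | ∃ X : Matrix (Fin (p + q)) (Fin (p + q)) ℂ,
      (∀ i : Fin (p + q), v.1 i = sval X (i : ℕ)) ∧
      (∀ i : Fin q, v.2.1 i = sval (blockTR p q X) (i : ℕ)) ∧
      (∀ i : Fin q, v.2.2 i = sval (blockBL p q X) (i : ℕ)) }

/-- The cone `T(p,q)`: triples `(s(X), s(X₁₁), s(X₂₂))`. -/
def coneT (p q : ℕ) : Set ((Fin (p + q) → ℝ) × (Fin p → ℝ) × (Fin q → ℝ)) :=
  { v | ∃ X : Matrix (Fin (p + q)) (Fin (p + q)) ℂ,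
      (∀ i : Fin (p + q), v.1 i = sval X (i : ℕ)) ∧
      (∀ i : Fin p, v.2.1 i = sval (blockTL p q X) (i : ℕ)) ∧
      (∀ i : Fin q, v.2.2 i = sval (blockBR p q X) (i : ℕ)) }

/-- `μ(A) = (a_r − r ≥ … ≥ a₂ − 2 ≥ a₁ − 1)` as a decreasing real vector, for
`A = {a₁ < … < a_r}` a subset of `[n]` (0-based indexing internally). -/
noncomputable def muVec {n r : ℕ} (A : Finset (Fin n)) (h : A.card = r) : Fin r → ℝ :=
  fun k => (((A.orderIsoOfFin h k.rev : Fin n) : ℕ) : ℝ) - ((k.rev : ℕ) : ℝ)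

/-- `A^o = {ℓ + 1 − a : a ∈ A}` inside `[ℓ]`. -/
def opp {n : ℕ} (A : Finset (Fin n)) : Finset (Fin n) := A.image Fin.rev

/-- `|s|_{K ∩ [q]}` where `K ⊆ [n]`, `s ∈ ℝ^q` and `[q]` is viewed inside `[n]`. -/
noncomputable def sumRestr {n q : ℕ} (s : Fin q → ℝ) (K : Finset (Fin n)) : ℝ :=
  ∑ i ∈ K, (if h : (i : ℕ) < q then s ⟨i, h⟩ else 0)

/-- The augmented matrix `Ŷ^{p,q} = [[0, Y], [Yᴴ, 0]]` of size `p + q`. -/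
def hatM (p q : ℕ) (Y : Matrix (Fin p) (Fin q) ℂ) : Matrix (Fin (p + q)) (Fin (p + q)) ℂ :=
  Matrix.reindex finSumFinEquiv finSumFinEquiv (Matrix.fromBlocks 0 Y Yᴴ 0)

/-!
Necessity. After multiplying `X` by block diagonal unitaries, both diagonal blocks are diagonal
and `X = P diag(γ) Q`. For a block diagonal unitary `W`, the number `Re tr (X W)` is
`∑ i, γ i * Re Z i i` with `Z = Q W P` unitary. Take `W = 1`, or choose `W` such that `Z`, possibly
after multiplication by `diag(1, 1, η)` with `|η| = 1`, has `-1` as an eigenvalue and, when needed,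
determinant `1`. This bounds the real part of the trace, and Abel summation gives the six
inequalities involving all of `γ`, `s` and `t`. The bounds `γ₁ ≥ s₁`, `γ₂ ≥ s₂`, `γ₃ ≤ s₁` are
interlacing: compare `‖X x‖` and `‖x‖` for a suitable vector `x` whose last coordinate vanishes. The
remaining inequalities follow linearly from these.

Sufficiency. The isogeny `SO(4) → SO(3) × SO(3)` identifies real `3 × 3` matrices with traceless
symmetric `4 × 4` matrices. Singular values `a, b, c` become the spectrum `a + b + c`, `a - b - c`,
`-a + b - c`, `-a - b + c`, and the two diagonal blocks, with singular values `s₁, s₂` and `t`,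
become diagonal `2 × 2` blocks with spectra `-t ± (s₁ - s₂)` and `t ± (s₁ + s₂)`. A symmetric
`4 × 4` matrix with these spectra is built by bordering a `3 × 3` matrix, using the converse of
Cauchy interlacing; one parameter is left free, and the intermediate value theorem chooses it.
Degenerate data are limits of generic ones, and `T(p, q)` is closed.
-/

section SingularValues

open Polynomial
open scoped ComplexOrder

theorem eigVec_antitone {k : ℕ} (X : Matrix (Fin k) (Fin k) ℂ) (hX : X.IsHermitian) :
    Antitone (eigVec X hX) :=
  (Tuple.monotone_sort hX.eigenvalues).comp_antitone Fin.rev_anti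

theorem charpoly_eq_prod_eigVec {k : ℕ} (X : Matrix (Fin k) (Fin k) ℂ) (hX : X.IsHermitian) :
    X.charpoly = ∏ i, (Polynomial.X - C (eigVec X hX i : ℂ)) := by
  rw [hX.charpoly_eq]
  exact (Equiv.prod_comp (Fin.revPerm.trans (Tuple.sort hX.eigenvalues))
    fun i => Polynomial.X - C (hX.eigenvalues i : ℂ)).symm

theorem eq_of_antitone_of_prod_X_sub_C_eq {k : ℕ} {f g : Fin k → ℝ} (hf : Antitone f)
    (hg : Antitone g)
    (h : ∏ i, (Polynomial.X - C (f i : ℂ)) = ∏ i, (Polynomial.X - C (g i : ℂ))) : f = g := by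
  have roots_eq (l : Fin k → ℝ) : (∏ i, (Polynomial.X - C (l i : ℂ))).roots =
      (Multiset.map l Finset.univ.val).map (fun x : ℝ => (x : ℂ)) := by
    rw [Multiset.map_map]
    exact (congrArg _ (by simp only [Multiset.map_map]; rfl)).trans
      (roots_multiset_prod_X_sub_C (Multiset.map (fun i => (l i : ℂ)) Finset.univ.val))
  have hmap : Multiset.map f Finset.univ.val = Multiset.map g Finset.univ.val :=
    Multiset.map_injective Complex.ofReal_injective <| by
      rw [← roots_eq f, ← roots_eq g, h]
  have hperm : (List.ofFn f).Perm (List.ofFn g) := by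
    rw [← Multiset.coe_eq_coe]
    simpa [List.ofFn_eq_map, Fin.univ_val_map] using hmap
  exact List.ofFn_injective (hperm.eq_of_sortedGE hf.sortedGE_ofFn hg.sortedGE_ofFn)

theorem sval_nonneg {a b : ℕ} (Y : Matrix (Fin a) (Fin b) ℂ) (i : ℕ) : 0 ≤ sval Y i := by
  unfold sval
  split_ifs
  exacts [Real.sqrt_nonneg _, le_rfl]

theorem sval_sq {a b : ℕ} (Y : Matrix (Fin a) (Fin b) ℂ) (i : Fin a) :
    sval Y i ^ 2 = eigVec (Y * Yᴴ) (isHermitian_mul_conjTranspose_self Y) i := by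
  rw [sval, dif_pos i.isLt, Real.sq_sqrt]
  exact (posSemidef_self_mul_conjTranspose Y).eigenvalues_nonneg _

theorem sval_antitone {a b : ℕ} (Y : Matrix (Fin a) (Fin b) ℂ) :
    Antitone fun i : Fin a => sval Y i := fun i j hij =>
  le_of_sq_le_sq (by
    simpa only [sval_sq] using eigVec_antitone _ (isHermitian_mul_conjTranspose_self Y) hij)
    (sval_nonneg Y i)

theorem eq_sval_iff {a b : ℕ} (Y : Matrix (Fin a) (Fin b) ℂ) (c : Fin a → ℝ) :
    (∀ i, c i = sval Y i) ↔ Antitone c ∧ (∀ i, 0 ≤ c i) ∧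
      (Y * Yᴴ).charpoly = ∏ i, (Polynomial.X - C ((c i ^ 2 : ℝ) : ℂ)) := by
  have hprod := charpoly_eq_prod_eigVec _ (isHermitian_mul_conjTranspose_self Y)
  simp only [← sval_sq] at hprod
  constructor
  · intro h
    obtain rfl : c = fun i : Fin a => sval Y i := funext h
    exact ⟨sval_antitone Y, fun i => sval_nonneg Y i, hprod⟩
  · rintro ⟨hc, hc0, h⟩ i
    have sq_antitone {f : Fin a → ℝ} (hf : Antitone f) (hf0 : ∀ i, 0 ≤ f i) :
        Antitone fun i => f i ^ 2 := fun i j hij => pow_le_pow_left₀ (hf0 j) (hf hij) 2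
    have hsq := eq_of_antitone_of_prod_X_sub_C_eq (sq_antitone hc hc0)
      (sq_antitone (sval_antitone Y) fun i => sval_nonneg Y i) (h.symm.trans hprod)
    exact (sq_eq_sq₀ (hc0 i) (sval_nonneg Y i)).1 (congrFun hsq i)

end SingularValues

section SingularValueDecomposition

open scoped InnerProductSpace ComplexOrder

variable {n 𝕜 : Type*} [Fintype n] [DecidableEq n] [RCLike 𝕜]

theorem exists_mem_unitaryGroup_row_eq {s : Set n} (A : Matrix n n 𝕜)
    (hA : ∀ i ∈ s, ∀ j ∈ s, (A * Aᴴ) i j = (1 : Matrix n n 𝕜) i j) :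
    ∃ U ∈ unitaryGroup n 𝕜, ∀ i ∈ s, U i = A i := by
  have horth : Orthonormal 𝕜 (s.domRestrict fun i => WithLp.toLp 2 (A i)) := by
    rw [orthonormal_iff_ite]
    rintro ⟨i, hi⟩ ⟨j, hj⟩
    exact (hA j hj i hi).trans (by simp only [one_apply, Subtype.mk.injEq, eq_comm])
  obtain ⟨b, hb⟩ := horth.exists_orthonormalBasis_extension_of_card_eq (by simp)
  refine ⟨of fun i => (b i).ofLp, mem_unitaryGroup_iff.2 ?_, fun i hi => ?_⟩
  · ext i j
    exact (orthonormal_iff_ite.1 b.orthonormal j i).trans (by simp only [one_apply, eq_comm])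
  · exact congrArg WithLp.ofLp (hb i hi)

theorem exists_mem_unitaryGroup_eq_diagonal_mul (A : Matrix n n 𝕜) (c : n → ℝ)
    (hA : A * Aᴴ = diagonal fun i => (c i : 𝕜) ^ 2) :
    ∃ U ∈ unitaryGroup n 𝕜, A = diagonal (fun i => (c i : 𝕜)) * U := by
  obtain ⟨U, hU, hrow⟩ := exists_mem_unitaryGroup_row_eq (s := {i | c i ≠ 0})
    (diagonal (fun i => (c i : 𝕜)⁻¹) * A) fun i hi j _ => by
      have hi' : (c i : 𝕜) ≠ 0 := RCLike.ofReal_ne_zero.2 hi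
      rw [conjTranspose_mul, diagonal_conjTranspose, Matrix.mul_assoc, ← Matrix.mul_assoc A, hA,
        diagonal_mul_diagonal, diagonal_mul_diagonal, ← diagonal_one, diagonal_apply,
        diagonal_apply]
      split_ifs
      · simp [field]
      · rfl
  refine ⟨U, hU, ?_⟩
  ext i j
  rw [diagonal_mul]
  by_cases hi : c i = 0
  · have hrow0 : A i ⬝ᵥ star (A i) = 0 :=
      (congrFun (congrFun hA i) i).trans (by simp [hi])
    simp [hi, dotProduct_self_star_eq_zero.1 hrow0]
  · rw [hrow i hi, diagonal_mul, mul_inv_cancel_left₀ (RCLike.ofReal_ne_zero.2 hi)]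

theorem exists_unitary_mul_diagonal_sval_mul {m : ℕ} (X : Matrix (Fin m) (Fin m) ℂ) :
    ∃ P ∈ unitaryGroup (Fin m) ℂ, ∃ Q ∈ unitaryGroup (Fin m) ℂ,
      X = P * diagonal (fun i : Fin m => (sval X i : ℂ)) * Q := by
  have hX := isHermitian_mul_conjTranspose_self X
  set σ : Equiv.Perm (Fin m) := Fin.revPerm.trans (Tuple.sort hX.eigenvalues)
  set U := (hX.eigenvectorUnitary : Matrix (Fin m) (Fin m) ℂ)
  have hU : Uᴴ * (X * Xᴴ) * U = diagonal fun i => (hX.eigenvalues i : ℂ) :=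
    (Unitary.conjStarAlgAut_star_apply _ _).symm.trans hX.conjStarAlgAut_star_eigenvectorUnitary
  set P := U.submatrix id σ
  have hP : P * Pᴴ = 1 := by
    rw [conjTranspose_submatrix, submatrix_mul_equiv,
      show U * Uᴴ = 1 from mem_unitaryGroup_iff.1 hX.eigenvectorUnitary.2, submatrix_id_id]
  have hdiag : Pᴴ * X * (Pᴴ * X)ᴴ = diagonal fun i : Fin m => (sval X i : ℂ) ^ 2 := by
    have hsq (i : Fin m) : (hX.eigenvalues (σ i) : ℂ) = (sval X i : ℂ) ^ 2 := by
      rw [← Complex.ofReal_pow, sval_sq]; rfl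
    simp only [← hsq]
    rw [conjTranspose_mul, conjTranspose_conjTranspose, ← Matrix.mul_assoc, Matrix.mul_assoc Pᴴ]
    exact (congrArg (fun M => M.submatrix σ σ) hU).trans (submatrix_diagonal_equiv _ σ)
  obtain ⟨Q, hQ, h⟩ := exists_mem_unitaryGroup_eq_diagonal_mul _ _ hdiag
  refine ⟨P, mem_unitaryGroup_iff.2 hP, Q, hQ, ?_⟩
  rw [Matrix.mul_assoc, ← Complex.coe_algebraMap]
  exact (show X = P * (Pᴴ * X) by rw [← Matrix.mul_assoc, hP, Matrix.one_mul]).trans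
    (congrArg (P * ·) h)

end SingularValueDecomposition

section Closedness

open Filter Topology

theorem isClosed_setOf_eq_sval (a b : ℕ) :
    IsClosed {x : (Fin a → ℝ) × Matrix (Fin a) (Fin b) ℂ | ∀ i, x.1 i = sval x.2 i} := by
  simp only [eq_sval_iff]
  refine (isClosed_antitone.preimage continuous_fst).and (.and ?_ ?_)
  · simp only [Set.ofPred_forall]
    exact isClosed_iInter fun i => isClosed_le (by fun_prop) (by fun_prop)
  · have charpoly_eq_iff (x : (Fin a → ℝ) × Matrix (Fin a) (Fin b) ℂ) :
        (x.2 * x.2ᴴ).charpoly = ∏ i, (Polynomial.X - Polynomial.C ((x.1 i ^ 2 : ℝ) : ℂ)) ↔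
          ∀ z, (scalar (Fin a) z - x.2 * x.2ᴴ).det = ∏ i, (z - ((x.1 i ^ 2 : ℝ) : ℂ)) := by
      simp only [← eval_charpoly]
      exact ⟨fun h z => by simp [h, Polynomial.eval_prod],
        fun h => Polynomial.funext fun z => by simp [h, Polynomial.eval_prod]⟩
    simp only [charpoly_eq_iff, Set.ofPred_forall]
    exact isClosed_iInter fun z => isClosed_eq (by fun_prop) (by fun_prop)

theorem norm_apply_le_sum_sval {m : ℕ} (X : Matrix (Fin m) (Fin m) ℂ) (i j : Fin m) :
    ‖X i j‖ ≤ ∑ k : Fin m, sval X k := by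
  obtain ⟨P, hP, Q, hQ, hX⟩ := exists_unitary_mul_diagonal_sval_mul X
  have hij : X i j = ∑ k, P i k * (sval X k : ℂ) * Q k j := by
    conv_lhs => rw [hX]
    simp only [mul_apply (N := Q), mul_diagonal]
  rw [hij]
  refine norm_sum_le_of_le _ fun k _ => ?_
  calc ‖P i k * (sval X k : ℂ) * Q k j‖ = ‖P i k‖ * sval X k * ‖Q k j‖ := by
        rw [norm_mul, norm_mul, Complex.norm_of_nonneg (sval_nonneg X k)]
    _ ≤ 1 * sval X k * 1 := by
        gcongr
        exacts [mul_nonneg zero_le_one (sval_nonneg X k), sval_nonneg X k,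
          entry_norm_bound_of_unitary hP i k, entry_norm_bound_of_unitary hQ k j]
    _ = sval X k := by ring

theorem isClosed_coneT (p q : ℕ) : IsClosed (coneT p q) := by
  refine IsSeqClosed.isClosed fun u v hu huv => ?_
  choose X hX using hu
  obtain ⟨R, hR⟩ : BddAbove (Set.range fun n => ∑ i, (u n).1 i) :=
    (((by fun_prop : Continuous fun v : (Fin (p + q) → ℝ) × (Fin p → ℝ) × (Fin q → ℝ) =>
      ∑ i, v.1 i).tendsto v).comp huv).bddAbove_range
  have hXR (n : ℕ) :
      X n ∈ Set.univ.pi fun _ => Set.univ.pi fun _ => Metric.closedBall (0 : ℂ) R := by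
    intro i _ j _
    rw [mem_closedBall_zero_iff]
    exact (norm_apply_le_sum_sval (X n) i j).trans
      (le_of_eq_of_le (by simp only [(hX n).1]) (hR ⟨n, rfl⟩))
  obtain ⟨Y, -, φ, hφ, hY⟩ := (isCompact_univ_pi fun _ => isCompact_univ_pi fun _ =>
    isCompact_closedBall (0 : ℂ) R).tendsto_subseq hXR
  have huφ := huv.comp hφ.tendsto_atTop
  have mem_of_tendsto {a : ℕ} {c : (Fin (p + q) → ℝ) × (Fin p → ℝ) × (Fin q → ℝ) → Fin a → ℝ}
      {B : Matrix (Fin (p + q)) (Fin (p + q)) ℂ → Matrix (Fin a) (Fin a) ℂ} (hc : Continuous c)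
      (hB : Continuous B) (h : ∀ n i, c (u n) i = sval (B (X n)) i) (i : Fin a) :
      c v i = sval (B Y) i :=
    (isClosed_setOf_eq_sval a a).mem_of_tendsto
      (((hc.tendsto v).comp huφ).prodMk_nhds ((hB.tendsto Y).comp hY))
      (Eventually.of_forall fun n => h (φ n)) i
  exact ⟨Y, mem_of_tendsto (c := Prod.fst) (B := id) (by fun_prop) continuous_id fun n => (hX n).1,
    mem_of_tendsto (c := fun v => v.2.1) (by fun_prop) (continuous_id.matrix_submatrix _ _)
      fun n => (hX n).2.1,
    mem_of_tendsto (c := fun v => v.2.2) (by fun_prop) (continuous_id.matrix_submatrix _ _)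
      fun n => (hX n).2.2⟩

end Closedness

section BlockSum

variable {p q : ℕ}

/-- The block diagonal matrix `A ⊕ D` of size `p + q`. -/
def blockSum {R : Type*} [Zero R] (A : Matrix (Fin p) (Fin p) R) (D : Matrix (Fin q) (Fin q) R) :
    Matrix (Fin (p + q)) (Fin (p + q)) R :=
  reindex finSumFinEquiv finSumFinEquiv (fromBlocks A 0 0 D)

theorem conjTranspose_blockSum {R : Type*} [AddMonoid R] [StarAddMonoid R]
    (A : Matrix (Fin p) (Fin p) R) (D : Matrix (Fin q) (Fin q) R) :
    (blockSum A D)ᴴ = blockSum Aᴴ Dᴴ := by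
  rw [blockSum, conjTranspose_reindex, fromBlocks_conjTranspose, conjTranspose_zero,
    conjTranspose_zero, blockSum]

theorem blockSum_mem_unitaryGroup {R : Type*} [CommRing R] [StarRing R]
    {A : Matrix (Fin p) (Fin p) R} {D : Matrix (Fin q) (Fin q) R}
    (hA : A ∈ unitaryGroup (Fin p) R) (hD : D ∈ unitaryGroup (Fin q) R) :
    blockSum A D ∈ unitaryGroup (Fin (p + q)) R := by
  have hA' : A * Aᴴ = 1 := mem_unitaryGroup_iff.1 hA
  have hD' : D * Dᴴ = 1 := mem_unitaryGroup_iff.1 hD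
  rw [mem_unitaryGroup_iff, star_eq_conjTranspose, conjTranspose_blockSum]
  simp [blockSum, submatrix_mul_equiv, fromBlocks_multiply, hA', hD']

section Zero

variable {R : Type*} [Zero R] (A : Matrix (Fin p) (Fin p) R) (D : Matrix (Fin q) (Fin q) R)

@[simp]
theorem blockSum_apply_castAdd_castAdd (i j : Fin p) :
    blockSum A D (i.castAdd q) (j.castAdd q) = A i j := by
  simp [blockSum]

@[simp]
theorem blockSum_apply_castAdd_natAdd (i : Fin p) (j : Fin q) :
    blockSum A D (i.castAdd q) (j.natAdd p) = 0 := by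
  simp [blockSum]

@[simp]
theorem blockSum_apply_natAdd_castAdd (i : Fin q) (j : Fin p) :
    blockSum A D (i.natAdd p) (j.castAdd q) = 0 := by
  simp [blockSum]

@[simp]
theorem blockSum_apply_natAdd_natAdd (i j : Fin q) :
    blockSum A D (i.natAdd p) (j.natAdd p) = D i j := by
  simp [blockSum]

end Zero

theorem det_blockSum {R : Type*} [CommRing R] (A : Matrix (Fin p) (Fin p) R)
    (D : Matrix (Fin q) (Fin q) R) : (blockSum A D).det = A.det * D.det := by
  rw [blockSum, det_reindex_self, det_fromBlocks_zero₂₁]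

section Semiring

variable {R : Type*} [Semiring R] (A A' : Matrix (Fin p) (Fin p) R)
  (D D' : Matrix (Fin q) (Fin q) R) (X : Matrix (Fin (p + q)) (Fin (p + q)) R)

theorem blockSum_mulVec_castAdd (x : Fin (p + q) → R) (i : Fin p) :
    (blockSum A D *ᵥ x) (i.castAdd q) = (A *ᵥ fun j => x (j.castAdd q)) i := by
  simp [mulVec, dotProduct, Fin.sum_univ_add]

theorem blockSum_mulVec_natAdd (x : Fin (p + q) → R) (i : Fin q) :
    (blockSum A D *ᵥ x) (i.natAdd p) = (D *ᵥ fun j => x (j.natAdd p)) i := by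
  simp [mulVec, dotProduct, Fin.sum_univ_add]

theorem blockSum_mul_mul_blockSum_submatrix_castAdd_castAdd :
    (blockSum A D * X * blockSum A' D').submatrix (Fin.castAdd q) (Fin.castAdd q) =
      A * X.submatrix (Fin.castAdd q) (Fin.castAdd q) * A' := by
  ext i j
  simp [mul_apply, Fin.sum_univ_add]

theorem blockSum_mul_mul_blockSum_submatrix_castAdd_natAdd :
    (blockSum A D * X * blockSum A' D').submatrix (Fin.castAdd q) (Fin.natAdd p) =
      A * X.submatrix (Fin.castAdd q) (Fin.natAdd p) * D' := by
  ext i j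
  simp [mul_apply, Fin.sum_univ_add]

theorem blockSum_mul_mul_blockSum_submatrix_natAdd_natAdd :
    (blockSum A D * X * blockSum A' D').submatrix (Fin.natAdd p) (Fin.natAdd p) =
      D * X.submatrix (Fin.natAdd p) (Fin.natAdd p) * D' := by
  ext i j
  simp [mul_apply, Fin.sum_univ_add]

end Semiring

theorem mulVec_castAdd (Y : Matrix (Fin (p + q)) (Fin (p + q)) ℂ) (x : Fin (p + q) → ℂ)
    (i : Fin p) :
    (Y *ᵥ x) (i.castAdd q) = (blockTL p q Y *ᵥ fun j => x (j.castAdd q)) i +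
      (blockTR p q Y *ᵥ fun j => x (j.natAdd p)) i := by
  simp [mulVec, dotProduct, Fin.sum_univ_add, blockTL, blockTR]

theorem trace_mul_blockSum (A : Matrix (Fin p) (Fin p) ℂ) (D : Matrix (Fin q) (Fin q) ℂ)
    (Y : Matrix (Fin (p + q)) (Fin (p + q)) ℂ) :
    (Y * blockSum A D).trace = (blockTL p q Y * A).trace + (blockBR p q Y * D).trace := by
  simp [trace, mul_apply, Fin.sum_univ_add, blockTL, blockBR]

theorem exists_unitary_mul_mul_eq_diagonal_sval {m : ℕ}
    (X : Matrix (Fin m) (Fin m) ℂ) :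
    ∃ P ∈ unitaryGroup (Fin m) ℂ, ∃ Q ∈ unitaryGroup (Fin m) ℂ,
      P * X * Q = diagonal fun i : Fin m => (sval X i : ℂ) := by
  obtain ⟨P, hP, Q, hQ, h⟩ := exists_unitary_mul_diagonal_sval_mul X
  refine ⟨_, Unitary.star_mem hP, _, Unitary.star_mem hQ, ?_⟩
  conv_lhs => rw [h]
  rw [Matrix.mul_assoc P, ← Matrix.mul_assoc (star P), mem_unitaryGroup_iff'.1 hP, Matrix.one_mul,
    Matrix.mul_assoc, mem_unitaryGroup_iff.1 hQ, Matrix.mul_one]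

theorem exists_unitary_of_mem_coneT {v : (Fin (p + q) → ℝ) × (Fin p → ℝ) × (Fin q → ℝ)}
    (hv : v ∈ coneT p q) :
    ∃ P ∈ unitaryGroup (Fin (p + q)) ℂ, ∃ Q ∈ unitaryGroup (Fin (p + q)) ℂ,
      blockTL p q (P * diagonal (fun i => (v.1 i : ℂ)) * Q) = diagonal (fun i => (v.2.1 i : ℂ)) ∧
      blockBR p q (P * diagonal (fun i => (v.1 i : ℂ)) * Q) = diagonal fun i => (v.2.2 i : ℂ) := by
  obtain ⟨X, hX, hTL, hBR⟩ := hv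
  simp only [hX, hTL, hBR]
  obtain ⟨P, hP, Q, hQ, h⟩ := exists_unitary_mul_diagonal_sval_mul X
  obtain ⟨P₁, hP₁, Q₁, hQ₁, h₁⟩ :=
    exists_unitary_mul_mul_eq_diagonal_sval (blockTL p q X)
  obtain ⟨P₂, hP₂, Q₂, hQ₂, h₂⟩ :=
    exists_unitary_mul_mul_eq_diagonal_sval (blockBR p q X)
  refine ⟨blockSum P₁ P₂ * P, mul_mem (blockSum_mem_unitaryGroup hP₁ hP₂) hP,
    Q * blockSum Q₁ Q₂, mul_mem hQ (blockSum_mem_unitaryGroup hQ₁ hQ₂), ?_⟩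
  have hXQ : blockSum P₁ P₂ * P * diagonal (fun i : Fin (p + q) => (sval X i : ℂ)) *
      (Q * blockSum Q₁ Q₂) = blockSum P₁ P₂ * X * blockSum Q₁ Q₂ := by
    conv_rhs => rw [h]
    simp only [Matrix.mul_assoc]
  rw [hXQ]
  exact ⟨(blockSum_mul_mul_blockSum_submatrix_castAdd_castAdd ..).trans h₁,
    (blockSum_mul_mul_blockSum_submatrix_natAdd_natAdd ..).trans h₂⟩

end BlockSum

section Unitary

open scoped ComplexConjugate ComplexOrder

section Fintype

variable {n : Type*} [Fintype n] [DecidableEq n] {U : Matrix n n ℂ}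

theorem neg_one_le_re_apply_of_unitary (hU : U ∈ unitaryGroup n ℂ) (i j : n) :
    -1 ≤ (U i j).re :=
  (abs_le.1 ((Complex.abs_re_le_norm _).trans (entry_norm_bound_of_unitary hU i j))).1

theorem re_apply_le_one_of_unitary (hU : U ∈ unitaryGroup n ℂ) (i j : n) : (U i j).re ≤ 1 :=
  (Complex.re_le_norm _).trans (entry_norm_bound_of_unitary hU i j)

theorem sum_norm_sq_mulVec_of_unitary (hU : U ∈ unitaryGroup n ℂ) (x : n → ℂ) :
    ∑ i, ‖(U *ᵥ x) i‖ ^ 2 = ∑ i, ‖x i‖ ^ 2 := by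
  have star_dotProduct_self (y : n → ℂ) : star y ⬝ᵥ y = ((∑ i, ‖y i‖ ^ 2 : ℝ) : ℂ) := by
    simp [dotProduct, Complex.conj_mul']
  have hdot : star (U *ᵥ x) ⬝ᵥ (U *ᵥ x) = star x ⬝ᵥ x := by
    rw [star_mulVec, dotProduct_mulVec, vecMul_vecMul, ← star_eq_conjTranspose,
      mem_unitaryGroup_iff'.1 hU, vecMul_one]
  rw [star_dotProduct_self, star_dotProduct_self] at hdot
  exact_mod_cast hdot

theorem diagonal_mem_unitaryGroup {d : n → ℂ} (hd : ∀ i, ‖d i‖ = 1) :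
    diagonal d ∈ unitaryGroup n ℂ := by
  rw [mem_unitaryGroup_iff, star_eq_conjTranspose, diagonal_conjTranspose, diagonal_mul_diagonal,
    ← diagonal_one]
  congr 1
  ext i
  simp [Complex.mul_conj', hd]

theorem norm_det_of_unitary (hU : U ∈ unitaryGroup n ℂ) : ‖U.det‖ = 1 :=
  CStarRing.norm_of_mem_unitary (det_of_mem_unitary hU)

theorem adjugate_of_unitary {R : Type*} [CommRing R] [StarRing R] {U : Matrix n n R}
    (hU : U ∈ unitaryGroup n R) : U.adjugate = U.det • Uᴴ := by
  have h := congrArg (· * Uᴴ) (adjugate_mul U)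
  simpa only [Matrix.mul_assoc, smul_mul, Matrix.one_mul,
    show U * Uᴴ = 1 from mem_unitaryGroup_iff.1 hU, Matrix.mul_one] using h

-- The reflection `R` negating `u` is unitary, and so is `U * R = U + 2 u uᴴ / (uᴴ u)`, whose trace
-- exceeds that of `U` by `2`.
theorem re_trace_le_card_sub_two_of_unitary (hU : U ∈ unitaryGroup n ℂ) (h : (1 + U).det = 0) :
    U.trace.re ≤ Fintype.card n - 2 := by
  obtain ⟨u, hu, hUu⟩ := exists_mulVec_eq_zero_iff.2 h
  replace hUu : U *ᵥ u = -u := by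
    rw [add_mulVec, one_mulVec] at hUu
    exact eq_neg_of_add_eq_zero_right hUu
  set c : ℂ := star u ⬝ᵥ u
  have hc : c ≠ 0 := dotProduct_star_self_eq_zero.not.2 hu
  have hstar : star c = c := (star_dotProduct u u).symm
  set R : Matrix n n ℂ := 1 - (2 / c) • vecMulVec u (star u)
  have hR : R ∈ unitaryGroup n ℂ := by
    have hRstar : star R = R := by
      simp [R, star_eq_conjTranspose, conjTranspose_vecMulVec, hstar]
    rw [mem_unitaryGroup_iff, hRstar]
    simp only [R, sub_mul, mul_sub, Matrix.one_mul, Matrix.mul_one, Matrix.smul_mul,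
      Matrix.mul_smul, vecMulVec_mul_vecMulVec, vecMulVec_smul, smul_smul]
    rw [show 2 / c * (2 / c * star u ⬝ᵥ u) = 2 * (2 / c) by
      change 2 / c * (2 / c * c) = _; field_simp]
    module
  have htrace : (U * R).trace = U.trace + 2 := by
    simp only [R, mul_sub, Matrix.mul_one, Matrix.mul_smul, mul_vecMulVec, hUu, trace_sub,
      trace_smul, trace_vecMulVec, neg_dotProduct, smul_eq_mul, dotProduct_comm u]
    change U.trace - 2 / c * -c = _
    field_simp
    ring
  have hle : (U * R).trace.re ≤ Fintype.card n := by
    rw [trace, Complex.re_sum]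
    refine (Finset.sum_le_sum fun i _ => re_apply_le_one_of_unitary (mul_mem hU hR) i i).trans ?_
    simp
  rw [htrace] at hle
  simpa [le_sub_iff_add_le] using hle

theorem exists_norm_eq_one_and_mul_eq {a b : ℂ} (h : ‖a‖ = ‖b‖) : ∃ w : ℂ, ‖w‖ = 1 ∧ w * a = b := by
  by_cases ha : a = 0
  · exact ⟨1, norm_one, by rw [ha, mul_zero, eq_comm, ← norm_eq_zero, ← h, ha, norm_zero]⟩
  · exact ⟨b / a, by rw [norm_div, h, div_self (h ▸ norm_ne_zero_iff.2 ha)], div_mul_cancel₀ b ha⟩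

theorem exists_phase_det_one_add_diagonal_mul_eq_zero (hU : U ∈ unitaryGroup n ℂ) (k : n) :
    ∃ d : n → ℂ, (∀ i, ‖d i‖ = 1) ∧ (∀ i ≠ k, d i = 1) ∧ (1 + diagonal d * U).det = 0 := by
  obtain ⟨x, hx, hUx⟩ := exists_mulVec_eq_zero_iff.2
    (det_eq_zero_of_row_eq_zero (A := (1 + U).updateRow k 0) k fun j => by simp)
  have hne {j : n} (hj : j ≠ k) : (U *ᵥ x) j = -x j := by
    have := congrFun hUx j
    rw [mulVec, updateRow_ne hj] at this
    have hadd : ((1 + U) *ᵥ x) j = 0 := this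
    rw [add_mulVec, one_mulVec] at hadd
    exact eq_neg_of_add_eq_zero_right hadd
  have hk : ‖(U *ᵥ x) k‖ = ‖-x k‖ := by
    have hsum := sum_norm_sq_mulVec_of_unitary hU x
    rw [← Finset.add_sum_erase _ _ (Finset.mem_univ k),
      ← Finset.add_sum_erase _ (fun i => ‖x i‖ ^ 2) (Finset.mem_univ k),
      Finset.sum_congr rfl fun j hj => by rw [hne (Finset.ne_of_mem_erase hj), norm_neg],
      add_left_inj] at hsum
    rw [norm_neg]
    exact (sq_eq_sq₀ (norm_nonneg _) (norm_nonneg _)).1 hsum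
  obtain ⟨w, hw, hwk⟩ := exists_norm_eq_one_and_mul_eq hk
  refine ⟨Function.update 1 k w, fun i => ?_, fun i hi => Function.update_of_ne hi _ _,
    exists_mulVec_eq_zero_iff.1 ⟨x, hx, ?_⟩⟩
  · rcases eq_or_ne i k with rfl | hi <;> simp [*]
  ext j
  rw [add_mulVec, one_mulVec, ← mulVec_mulVec, Pi.add_apply, mulVec_diagonal, Pi.zero_apply]
  rcases eq_or_ne j k with rfl | hj
  · rw [Function.update_self, hwk, add_neg_cancel]
  · rw [Function.update_of_ne hj, hne hj, Pi.one_apply, one_mul, add_neg_cancel]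

end Fintype

theorem re_trace_of_unitary_fin_two {U : Matrix (Fin 2) (Fin 2) ℂ} (hU : U ∈ unitaryGroup (Fin 2) ℂ)
    (hdet : U.det = -1) : U.trace.re = 0 := by
  have h := congrArg trace (adjugate_of_unitary hU)
  rw [hdet, neg_one_smul, trace_neg, trace_conjTranspose] at h
  have htr : U.adjugate.trace = U.trace := by
    simp [adjugate_fin_two, trace_fin_two, add_comm]
  have := congrArg Complex.re (htr.symm.trans h)
  simp only [Complex.neg_re, Complex.star_def, Complex.conj_re] at this
  linarith

-- `det (1 + U) = 1 + tr U + tr (adj U) + det U`, where `adj U = Uᴴ`.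
theorem re_trace_of_unitary_fin_three {U : Matrix (Fin 3) (Fin 3) ℂ}
    (hU : U ∈ unitaryGroup (Fin 3) ℂ) (hdet : U.det = 1) (h : (1 + U).det = 0) :
    U.trace.re = -1 := by
  have hadj : U.adjugate.trace = conj U.trace := by
    rw [adjugate_of_unitary hU, hdet, one_smul, trace_conjTranspose]; rfl
  have hexp : (1 + U).det = 1 + U.trace + U.adjugate.trace + U.det := by
    simp [det_fin_three, trace_fin_three, adjugate_fin_three]
    ring
  have := congrArg Complex.re (h.symm.trans hexp)
  rw [hadj, hdet] at this
  simp only [Complex.add_re, Complex.zero_re, Complex.one_re, Complex.conj_re] at this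
  linarith

theorem exists_unitary_fin_two_mulVec_single (v : Fin 2 → ℂ) :
    ∃ S ∈ unitaryGroup (Fin 2) ℂ,
      S.det = 1 ∧ S *ᵥ Pi.single 0 (√(∑ i, ‖v i‖ ^ 2) : ℂ) = v := by
  set r := √(∑ i, ‖v i‖ ^ 2)
  have hr : (r : ℂ) ^ 2 = v 0 * conj (v 0) + v 1 * conj (v 1) := by
    rw [← Complex.ofReal_pow, Real.sq_sqrt (Finset.sum_nonneg fun i _ => sq_nonneg ‖v i‖)]
    simp [Complex.mul_conj']
  by_cases hr0 : (r : ℂ) = 0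
  · refine ⟨1, one_mem _, det_one, ?_⟩
    have hsum : ∑ i, ‖v i‖ ^ 2 = 0 :=
      (Real.sqrt_eq_zero (Finset.sum_nonneg fun i _ => sq_nonneg ‖v i‖)).1
        (Complex.ofReal_eq_zero.1 hr0)
    ext i
    simpa [hr0, eq_comm] using
      (Finset.sum_eq_zero_iff_of_nonneg fun i _ => sq_nonneg ‖v i‖).1 hsum i (Finset.mem_univ i)
  · refine ⟨(r : ℂ)⁻¹ • !![v 0, -conj (v 1); v 1, conj (v 0)], mem_unitaryGroup_iff.2 ?_, ?_, ?_⟩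
    · ext i j
      fin_cases i <;> fin_cases j <;> simp [mul_apply] <;> field_simp <;>
        first | linear_combination -hr | ring
    · rw [det_smul, det_fin_two]
      simp
      field_simp
      linear_combination -hr
    · ext i
      fin_cases i <;> simp <;> field_simp

theorem exists_unitary_fin_two_mulVec_eq {x y : Fin 2 → ℂ}
    (hxy : ∑ i, ‖x i‖ ^ 2 = ∑ i, ‖y i‖ ^ 2) {δ : ℂ} (hδ : ‖δ‖ = 1) :
    ∃ W ∈ unitaryGroup (Fin 2) ℂ, W.det = δ ∧ W *ᵥ x = y := by
  obtain ⟨S, hS, hSdet, hSx⟩ := exists_unitary_fin_two_mulVec_single x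
  obtain ⟨T, hT, hTdet, hTy⟩ := exists_unitary_fin_two_mulVec_single y
  have hD : diagonal ![1, δ] ∈ unitaryGroup (Fin 2) ℂ :=
    diagonal_mem_unitaryGroup fun i => by fin_cases i <;> simp [hδ]
  refine ⟨T * diagonal ![1, δ] * star S, mul_mem (mul_mem hT hD) (Unitary.star_mem hS), ?_, ?_⟩
  · simp [star_eq_conjTranspose, hSdet, hTdet]
  · have hSx' : star S *ᵥ x = Pi.single 0 (√(∑ i, ‖y i‖ ^ 2) : ℂ) := by
      conv_lhs => rw [← hSx]
      rw [mulVec_mulVec, mem_unitaryGroup_iff'.1 hS, one_mulVec, hxy]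
    rw [← mulVec_mulVec, ← mulVec_mulVec, hSx', diagonal_mulVec_single]
    simpa using hTy

end Unitary

section Necessity

open scoped ComplexConjugate

variable {p q : ℕ}

theorem blockSum_diagonal (d : Fin (p + q) → ℂ) :
    blockSum (diagonal fun i => d (i.castAdd q)) (diagonal fun j => d (j.natAdd p)) =
      diagonal d := by
  ext i j
  induction i using Fin.addCases <;> induction j using Fin.addCases <;>
    simp [diagonal_apply, Fin.ext_iff] <;> omega

theorem antitone_and_nonneg_of_mem_coneT {v : (Fin (p + q) → ℝ) × (Fin p → ℝ) × (Fin q → ℝ)}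
    (hv : v ∈ coneT p q) :
    (Antitone v.1 ∧ ∀ i, 0 ≤ v.1 i) ∧ (Antitone v.2.1 ∧ ∀ i, 0 ≤ v.2.1 i) ∧
      (Antitone v.2.2 ∧ ∀ j, 0 ≤ v.2.2 j) := by
  obtain ⟨X, h, hTL, hBR⟩ := hv
  have key {a : ℕ} {c : Fin a → ℝ} {Y : Matrix (Fin a) (Fin a) ℂ} (hc : ∀ i, c i = sval Y i) :
      Antitone c ∧ ∀ i, 0 ≤ c i :=
    ⟨((eq_sval_iff Y c).1 hc).1, ((eq_sval_iff Y c).1 hc).2.1⟩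
  exact ⟨key h, key hTL, key hBR⟩

theorem sum_mul_re_apply_eq {P Q : Matrix (Fin (p + q)) (Fin (p + q)) ℂ} {g : Fin (p + q) → ℝ}
    {s : Fin p → ℝ} {t : Fin q → ℝ}
    (hTL : blockTL p q (P * diagonal (fun i => (g i : ℂ)) * Q) = diagonal fun i => (s i : ℂ))
    (hBR : blockBR p q (P * diagonal (fun i => (g i : ℂ)) * Q) = diagonal fun j => (t j : ℂ))
    (A : Matrix (Fin p) (Fin p) ℂ) (D : Matrix (Fin q) (Fin q) ℂ) :
    ∑ i, g i * ((Q * blockSum A D * P) i i).re =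
      ∑ i, s i * (A i i).re + ∑ j, t j * (D j j).re := by
  have h := trace_mul_blockSum A D (P * diagonal (fun i => (g i : ℂ)) * Q)
  rw [hTL, hBR, Matrix.mul_assoc, Matrix.mul_assoc, trace_mul_comm, Matrix.mul_assoc] at h
  simpa [trace, diagonal_mul] using congrArg Complex.re h

theorem sum_le_sum_of_mem_coneT {v : (Fin (p + q) → ℝ) × (Fin p → ℝ) × (Fin q → ℝ)}
    (hv : v ∈ coneT p q) : ∑ i, v.2.1 i + ∑ j, v.2.2 j ≤ ∑ i, v.1 i := by
  obtain ⟨P, hP, Q, hQ, hTL, hBR⟩ := exists_unitary_of_mem_coneT hv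
  have hZ := mul_mem (mul_mem hQ (blockSum_mem_unitaryGroup (one_mem _) (one_mem _))) hP
  have h := sum_mul_re_apply_eq hTL hBR 1 1
  simp only [one_apply_eq, Complex.one_re, mul_one] at h
  rw [← h]
  exact Finset.sum_le_sum fun i _ => mul_le_of_le_one_right
    ((antitone_and_nonneg_of_mem_coneT hv).1.2 i) (re_apply_le_one_of_unitary hZ i i)

theorem exists_phase_sum_eq_of_mem_coneT
    {v : (Fin (p + q) → ℝ) × (Fin p → ℝ) × (Fin q → ℝ)} (hv : v ∈ coneT p q) (k : Fin (p + q)) :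
    ∃ d : Fin (p + q) → ℂ, (∀ i, ‖d i‖ = 1) ∧ (∀ i ≠ k, d i = 1) ∧
      ∃ Z ∈ unitaryGroup (Fin (p + q)) ℂ, Z.trace.re ≤ (p + q : ℕ) - 2 ∧
        ∑ i, v.1 i * (Z i i).re =
          ∑ i, v.2.1 i * (d (i.castAdd q)).re + ∑ j, v.2.2 j * (d (j.natAdd p)).re := by
  obtain ⟨P, hP, Q, hQ, hTL, hBR⟩ := exists_unitary_of_mem_coneT hv
  obtain ⟨d, hd, hdk, hdet⟩ := exists_phase_det_one_add_diagonal_mul_eq_zero (mul_mem hP hQ) k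
  have hZ : Q * diagonal d * P ∈ unitaryGroup (Fin (p + q)) ℂ :=
    mul_mem (mul_mem hQ (diagonal_mem_unitaryGroup hd)) hP
  refine ⟨d, hd, hdk, Q * diagonal d * P, hZ, ?_, ?_⟩
  · refine (re_trace_le_card_sub_two_of_unitary hZ ?_).trans_eq (by simp)
    rwa [Matrix.mul_assoc, det_one_add_mul_comm, Matrix.mul_assoc]
  · rw [← blockSum_diagonal, sum_mul_re_apply_eq hTL hBR]
    simp only [diagonal_apply_eq]

theorem exists_ne_zero_two_dotProducts_eq_zero (a b : Fin 3 → ℂ) :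
    ∃ x ≠ 0, a ⬝ᵥ x = 0 ∧ b ⬝ᵥ x = 0 := by
  obtain ⟨x, hx, h⟩ := exists_mulVec_eq_zero_iff.2
    (det_eq_zero_of_row_eq_zero (A := of ![a, b, 0]) 2 fun _ => rfl)
  exact ⟨x, hx, congrFun h 0, congrFun h 1⟩

theorem le_of_forall_sq_mul_le_sq_mul (r : Fin 3 → ℂ) {c d : ℝ} (hd : 0 ≤ d)
    (hcd : ∀ x : Fin 3 → ℂ, x 2 = 0 → r ⬝ᵥ x = 0 →
      c ^ 2 * (‖x 0‖ ^ 2 + ‖x 1‖ ^ 2) ≤ d ^ 2 * (‖x 0‖ ^ 2 + ‖x 1‖ ^ 2)) : c ≤ d := by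
  obtain ⟨x, hx, hx2, hrx⟩ := exists_ne_zero_two_dotProducts_eq_zero (Pi.single 2 1) r
  rw [single_one_dotProduct] at hx2
  have hpos : 0 < ‖x 0‖ ^ 2 + ‖x 1‖ ^ 2 := by
    refine lt_of_le_of_ne (by positivity) fun h0 => hx ?_
    obtain ⟨h0, h1⟩ := (add_eq_zero_iff_of_nonneg (sq_nonneg _) (sq_nonneg _)).1 h0.symm
    ext i
    fin_cases i
    exacts [by simpa using h0, by simpa using h1, hx2]
  exact (abs_le_of_sq_le_sq' (le_of_mul_le_mul_right (hcd x hx2 hrx) hpos) hd).2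

theorem exists_unitary_det_one_add_blockSum_mul_eq_zero {U : Matrix (Fin (2 + 1)) (Fin (2 + 1)) ℂ}
    (hU : U ∈ unitaryGroup (Fin (2 + 1)) ℂ) {δ : ℂ} (hδ : ‖δ‖ = 1) :
    ∃ W ∈ unitaryGroup (Fin 2) ℂ, W.det = δ ∧
      ∀ D : Matrix (Fin 1) (Fin 1) ℂ, (1 + blockSum W D * U).det = 0 := by
  obtain ⟨x, hx, hx2, hy2⟩ := exists_ne_zero_two_dotProducts_eq_zero (Pi.single 2 1) (U 2)
  rw [single_one_dotProduct] at hx2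
  set y := U *ᵥ x with hy
  have hy2 : y 2 = 0 := hy2
  have hnorm : ∑ i, ‖y (Fin.castAdd 1 i)‖ ^ 2 = ∑ i, ‖(-x) (Fin.castAdd 1 i)‖ ^ 2 := by
    have := sum_norm_sq_mulVec_of_unitary hU x
    rw [← hy, Fin.sum_univ_add, Fin.sum_univ_add] at this
    simpa [Fin.natAdd, hx2, hy2] using this
  obtain ⟨W, hW, hWdet, hWy⟩ := exists_unitary_fin_two_mulVec_eq hnorm hδ
  refine ⟨W, hW, hWdet, fun D => exists_mulVec_eq_zero_iff.1 ⟨x, hx, ?_⟩⟩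
  have hyW : blockSum W D *ᵥ y = -x := by
    ext i
    induction i using Fin.addCases with
    | left i => rw [blockSum_mulVec_castAdd, hWy]
    | right j =>
      rw [blockSum_mulVec_natAdd, Subsingleton.elim j 0]
      simp [mulVec, dotProduct, Fin.natAdd, hx2, hy2]
  rw [add_mulVec, one_mulVec, ← mulVec_mulVec, ← hy, hyW, add_neg_cancel]

section TwoOne

variable {g : Fin (2 + 1) → ℝ} {s : Fin 2 → ℝ} {t : ℝ}

theorem ordered_of_mem_coneT (h : (g, s, fun _ : Fin 1 => t) ∈ coneT 2 1) :
    (g 1 ≤ g 0 ∧ g 2 ≤ g 1 ∧ 0 ≤ g 2) ∧ (s 1 ≤ s 0 ∧ 0 ≤ s 1) ∧ 0 ≤ t := by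
  obtain ⟨⟨hg, hg0⟩, ⟨hs, hs0⟩, -, ht⟩ := antitone_and_nonneg_of_mem_coneT h
  exact ⟨⟨hg (by decide), hg (by decide), hg0 2⟩, ⟨hs (by decide), hs0 1⟩, ht 0⟩

theorem sum_mul_le_of_partial_sums_le {r : Fin (2 + 1) → ℝ} {a b c : ℝ}
    (hg : g 1 ≤ g 0 ∧ g 2 ≤ g 1 ∧ 0 ≤ g 2) (ha : r 0 ≤ a) (hb : r 0 + r 1 ≤ b)
    (hc : r 0 + r 1 + r 2 ≤ c) : ∑ i, g i * r i ≤ (g 0 - g 1) * a + (g 1 - g 2) * b + g 2 * c := by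
  obtain ⟨h₁, h₂, h₃⟩ := hg
  rw [Fin.sum_univ_three]
  linarith [mul_le_mul_of_nonneg_left ha (sub_nonneg.2 h₁),
    mul_le_mul_of_nonneg_left hb (sub_nonneg.2 h₂), mul_le_mul_of_nonneg_left hc h₃]

theorem add_sub_le_of_mem_coneT (h : (g, s, fun _ : Fin 1 => t) ∈ coneT 2 1) :
    s 0 + s 1 - t ≤ g 0 + g 1 - g 2 ∧ s 0 - s 1 + t ≤ g 0 + g 1 - g 2 := by
  obtain ⟨hg, ⟨-, hs⟩, ht⟩ := ordered_of_mem_coneT h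
  have key (k : Fin (2 + 1)) : ∃ r : Fin (2 + 1) → ℝ, (∀ i, -1 ≤ r i) ∧ (∀ i ≠ k, r i = 1) ∧
      s 0 * r 0 + s 1 * r 1 + t * r 2 ≤ g 0 + g 1 - g 2 := by
    obtain ⟨d, hd, hdk, Z, hZ, htr, hsum⟩ := exists_phase_sum_eq_of_mem_coneT h k
    refine ⟨fun i => (d i).re, fun i => ?_, fun i hi => by simp [hdk i hi], ?_⟩
    · exact (abs_le.1 ((Complex.abs_re_le_norm _).trans (hd i).le)).1
    · have hone (i : Fin (2 + 1)) : (Z i i).re ≤ 1 := re_apply_le_one_of_unitary hZ i i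
      have htr' : (Z 0 0).re + (Z 1 1).re + (Z 2 2).re ≤ 1 := by
        rw [trace_fin_three] at htr
        norm_num at htr ⊢
        exact htr
      have hle := sum_mul_le_of_partial_sums_le (r := fun i => (Z i i).re) hg (hone 0)
        (add_le_add (hone 0) (hone 1)) htr'
      rw [hsum, Fin.sum_univ_two, Fin.sum_univ_one] at hle
      change s 0 * (d 0).re + s 1 * (d 1).re + t * (d 2).re ≤ _ at hle
      linarith
  constructor
  · obtain ⟨r, hr, hrk, hle⟩ := key 2
    rw [hrk 0 (by decide), hrk 1 (by decide)] at hle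
    linarith [mul_le_mul_of_nonneg_left (hr 2) ht]
  · obtain ⟨r, hr, hrk, hle⟩ := key 1
    rw [hrk 0 (by decide), hrk 2 (by decide)] at hle
    linarith [mul_le_mul_of_nonneg_left (hr 1) hs]

theorem exists_unitary_sum_eq_of_mem_coneT (h : (g, s, fun _ : Fin 1 => t) ∈ coneT 2 1) :
    ∃ u : ℂ, ‖u‖ = 1 ∧ ∀ δ ε η : ℂ, ‖δ‖ = 1 → ‖ε‖ = 1 → ‖η‖ = 1 → u * δ * ε * η = 1 →
      ∃ W ∈ unitaryGroup (Fin 2) ℂ, W.det = δ ∧ ∃ Z ∈ unitaryGroup (Fin (2 + 1)) ℂ,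
        (Z 0 0).re + (Z 1 1).re + (Z 2 2 * η).re = -1 ∧
        ∑ i, g i * (Z i i).re = s 0 * (W 0 0).re + s 1 * (W 1 1).re + t * ε.re := by
  obtain ⟨P, hP, Q, hQ, hTL, hBR⟩ := exists_unitary_of_mem_coneT h
  refine ⟨P.det * Q.det, by rw [norm_mul, norm_det_of_unitary hP, norm_det_of_unitary hQ, one_mul],
    fun δ ε η hδ hε hη hu => ?_⟩
  set E : Matrix (Fin (2 + 1)) (Fin (2 + 1)) ℂ := diagonal ![1, 1, η]
  have hE : E ∈ unitaryGroup (Fin (2 + 1)) ℂ :=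
    diagonal_mem_unitaryGroup fun i => by fin_cases i <;> simp [hη]
  obtain ⟨W, hW, hWdet, hWU⟩ :=
    exists_unitary_det_one_add_blockSum_mul_eq_zero (mul_mem (mul_mem hP hE) hQ) hδ
  set D : Matrix (Fin 1) (Fin 1) ℂ := diagonal fun _ => ε
  have hD : D ∈ unitaryGroup (Fin 1) ℂ := diagonal_mem_unitaryGroup fun _ => hε
  have hZ := mul_mem (mul_mem hQ (blockSum_mem_unitaryGroup hW hD)) hP
  refine ⟨W, hW, hWdet, Q * blockSum W D * P, hZ, ?_, ?_⟩
  · have hdet : (Q * blockSum W D * P * E).det = 1 := by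
      rw [det_mul, det_mul, det_mul, det_blockSum, hWdet, det_diagonal, det_diagonal]
      simp [Fin.prod_univ_three]
      linear_combination hu
    have hsing : (1 + Q * blockSum W D * P * E).det = 0 := by
      have := hWU D
      rwa [← Matrix.mul_assoc, det_one_add_mul_comm, ← Matrix.mul_assoc, ← Matrix.mul_assoc] at this
    have htr := re_trace_of_unitary_fin_three (mul_mem hZ hE) hdet hsing
    rw [trace_fin_three] at htr
    simpa [E, mul_diagonal] using htr
  · simpa [D, Fin.sum_univ_two] using sum_mul_re_apply_eq hTL hBR W D

theorem neg_add_add_le_of_mem_coneT (h : (g, s, fun _ : Fin 1 => t) ∈ coneT 2 1) :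
    -s 0 + s 1 + t ≤ g 0 - g 1 + g 2 := by
  obtain ⟨hg, ⟨hs, -⟩, -⟩ := ordered_of_mem_coneT h
  obtain ⟨u, hu, key⟩ := exists_unitary_sum_eq_of_mem_coneT h
  obtain ⟨W, hW, hWdet, Z, hZ, htr, hsum⟩ := key (-1) 1 (-conj u) (by simp) (by simp) (by simpa)
    (by simp [Complex.mul_conj', hu])
  have hη : -1 ≤ (Z 2 2 * -conj u).re := (abs_le.1 ((Complex.abs_re_le_norm _).trans (by
    simpa [hu] using entry_norm_bound_of_unitary hZ 2 2))).1
  have hle := sum_mul_le_of_partial_sums_le (r := fun i => (Z i i).re) (b := 0) (c := 1) hg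
    (re_apply_le_one_of_unitary hZ 0 0) (by linarith)
    (by linarith [re_apply_le_one_of_unitary hZ 2 2])
  have hWtr := re_trace_of_unitary_fin_two hW hWdet
  rw [trace_fin_two, Complex.add_re] at hWtr
  rw [hsum, eq_neg_of_add_eq_zero_right hWtr, Complex.one_re] at hle
  linarith [mul_le_mul_of_nonneg_left (neg_one_le_re_apply_of_unitary hW 0 0) (sub_nonneg.2 hs)]

theorem neg_sub_le_of_mem_coneT (h : (g, s, fun _ : Fin 1 => t) ∈ coneT 2 1) :
    -s 0 + s 1 - t ≤ g 0 - g 1 - g 2 ∧ -s 0 - s 1 + t ≤ g 0 - g 1 - g 2 := by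
  obtain ⟨hg, ⟨hs, hs0⟩, ht⟩ := ordered_of_mem_coneT h
  obtain ⟨u, hu, key⟩ := exists_unitary_sum_eq_of_mem_coneT h
  have key' (δ ε : ℂ) (hδ : ‖δ‖ = 1) (hε : ‖ε‖ = 1) (huδ : u * δ * ε = 1) :
      ∃ W ∈ unitaryGroup (Fin 2) ℂ, W.det = δ ∧
        s 0 * (W 0 0).re + s 1 * (W 1 1).re + t * ε.re ≤ g 0 - g 1 - g 2 := by
    obtain ⟨W, hW, hWdet, Z, hZ, htr, hsum⟩ := key δ ε 1 hδ hε norm_one (by rw [mul_one, huδ])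
    rw [mul_one] at htr
    refine ⟨W, hW, hWdet, hsum ▸ ?_⟩
    have hle := sum_mul_le_of_partial_sums_le (r := fun i => (Z i i).re) (b := 0) hg
      (re_apply_le_one_of_unitary hZ 0 0) (by linarith [neg_one_le_re_apply_of_unitary hZ 2 2])
      htr.le
    linarith
  constructor
  · obtain ⟨W, hW, hWdet, hle⟩ := key' (-1) (-conj u) (by simp) (by simpa)
      (by simp [Complex.mul_conj', hu])
    have hWtr := re_trace_of_unitary_fin_two hW hWdet
    rw [trace_fin_two, Complex.add_re] at hWtr
    rw [eq_neg_of_add_eq_zero_right hWtr] at hle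
    have hε : -1 ≤ (-conj u).re := (abs_le.1 ((Complex.abs_re_le_norm _).trans (by simp [hu]))).1
    linarith [mul_le_mul_of_nonneg_left (neg_one_le_re_apply_of_unitary hW 0 0) (sub_nonneg.2 hs),
      mul_le_mul_of_nonneg_left hε ht]
  · obtain ⟨W, hW, -, hle⟩ := key' (conj u) 1 (by simpa) norm_one (by simp [Complex.mul_conj', hu])
    rw [Complex.one_re] at hle
    linarith [mul_le_mul_of_nonneg_left (neg_one_le_re_apply_of_unitary hW 0 0) (hs0.trans hs),
      mul_le_mul_of_nonneg_left (neg_one_le_re_apply_of_unitary hW 1 1) hs0]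

theorem exists_unitary_sum_sq_eq_of_mem_coneT (h : (g, s, fun _ : Fin 1 => t) ∈ coneT 2 1) :
    ∃ Q ∈ unitaryGroup (Fin (2 + 1)) ℂ, ∃ a : Fin (2 + 1) → ℂ, ∀ x : Fin (2 + 1) → ℂ, x 2 = 0 →
      ∑ i, g i ^ 2 * ‖(Q *ᵥ x) i‖ ^ 2 =
        s 0 ^ 2 * ‖x 0‖ ^ 2 + s 1 ^ 2 * ‖x 1‖ ^ 2 + ‖a ⬝ᵥ x‖ ^ 2 := by
  obtain ⟨P, hP, Q, hQ, hTL, -⟩ := exists_unitary_of_mem_coneT h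
  set Y := P * diagonal (fun i => (g i : ℂ)) * Q with hY
  refine ⟨Q, hQ, Y 2, fun x hx => ?_⟩
  have hnorm : ∑ i, ‖(Y *ᵥ x) i‖ ^ 2 = ∑ i, g i ^ 2 * ‖(Q *ᵥ x) i‖ ^ 2 := by
    rw [hY, Matrix.mul_assoc, ← mulVec_mulVec, sum_norm_sq_mulVec_of_unitary hP, ← mulVec_mulVec]
    simp [mulVec_diagonal, mul_pow]
  have hblock (i : Fin 2) : (Y *ᵥ x) (i.castAdd 1) = s i * x (i.castAdd 1) := by
    have hx' : (fun j : Fin 1 => x (j.natAdd 2)) = 0 :=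
      funext fun j => by rwa [Fin.fin_one_eq_zero j]
    rw [mulVec_castAdd, hTL, mulVec_diagonal, hx', mulVec_zero, Pi.zero_apply, add_zero]
  rw [← hnorm, Fin.sum_univ_add, Fin.sum_univ_two, Fin.sum_univ_one, hblock, hblock]
  simp only [norm_mul, mul_pow, Complex.norm_real, Real.norm_eq_abs, sq_abs]
  rfl

theorem interlacing_of_mem_coneT (h : (g, s, fun _ : Fin 1 => t) ∈ coneT 2 1) :
    s 0 ≤ g 0 ∧ s 1 ≤ g 1 ∧ g 2 ≤ s 0 := by
  obtain ⟨⟨hg₁, hg₂, hg₃⟩, ⟨hs, hs0⟩, -⟩ := ordered_of_mem_coneT h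
  obtain ⟨Q, hQ, a, hQa⟩ := exists_unitary_sum_sq_eq_of_mem_coneT h
  have hnorm {x : Fin 3 → ℂ} (hx : x 2 = 0) :
      ‖(Q *ᵥ x) 0‖ ^ 2 + ‖(Q *ᵥ x) 1‖ ^ 2 + ‖(Q *ᵥ x) 2‖ ^ 2 = ‖x 0‖ ^ 2 + ‖x 1‖ ^ 2 := by
    simpa [Fin.sum_univ_three, hx] using sum_norm_sq_mulVec_of_unitary hQ x
  have hg₁' := pow_le_pow_left₀ (hg₃.trans hg₂) hg₁ 2
  have hg₂' := pow_le_pow_left₀ hg₃ hg₂ 2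
  have hs' := pow_le_pow_left₀ hs0 hs 2
  refine ⟨
    le_of_forall_sq_mul_le_sq_mul (Pi.single 1 1) (hg₃.trans (hg₂.trans hg₁)) fun x hx2 hx1 => ?_,
    le_of_forall_sq_mul_le_sq_mul (Q 0) (hg₃.trans hg₂) fun x hx2 hx0 => ?_,
    le_of_forall_sq_mul_le_sq_mul a (hs0.trans hs) fun x hx2 hax => ?_⟩
  · rw [single_one_dotProduct] at hx1
    have hsum := hQa x hx2
    rw [Fin.sum_univ_three] at hsum
    have hx := hnorm hx2
    rw [hx1, norm_zero, zero_pow two_ne_zero] at hsum hx ⊢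
    rw [← hx]
    rw [add_zero] at hx
    nlinarith [mul_le_mul_of_nonneg_right hg₁' (sq_nonneg ‖(Q *ᵥ x) 1‖),
      mul_le_mul_of_nonneg_right (hg₂'.trans hg₁') (sq_nonneg ‖(Q *ᵥ x) 2‖), sq_nonneg ‖a ⬝ᵥ x‖]
  · have hQ0 : (Q *ᵥ x) 0 = 0 := hx0
    have hsum := hQa x hx2
    rw [Fin.sum_univ_three] at hsum
    have hx := hnorm hx2
    rw [hQ0, norm_zero, zero_pow two_ne_zero] at hsum hx
    rw [← hx]
    nlinarith [mul_le_mul_of_nonneg_right hg₂' (sq_nonneg ‖(Q *ᵥ x) 2‖),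
      mul_le_mul_of_nonneg_right hs' (sq_nonneg ‖x 0‖), sq_nonneg ‖a ⬝ᵥ x‖]
  · have hsum := hQa x hx2
    rw [Fin.sum_univ_three] at hsum
    rw [hax, norm_zero, zero_pow two_ne_zero] at hsum
    nlinarith [hnorm hx2, mul_le_mul_of_nonneg_right (hg₂'.trans hg₁') (sq_nonneg ‖(Q *ᵥ x) 0‖),
      mul_le_mul_of_nonneg_right hg₂' (sq_nonneg ‖(Q *ᵥ x) 1‖),
      mul_le_mul_of_nonneg_right hs' (sq_nonneg ‖x 1‖)]

end TwoOne

end Necessity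

section Davenport

open Polynomial

/-- The symmetric traceless `4 × 4` matrix attached to a real `3 × 3` matrix `x` under the
isogeny `SO(4) → SO(3) × SO(3)` (Davenport's matrix): if `x` has singular values `a, b, c` and
nonnegative determinant, its eigenvalues are `a + b + c`, `a - b - c`, `-a + b - c`, `-a - b + c`.
The coordinates are ordered so that its diagonal `2 × 2` blocks depend only on the diagonal blocks
of `x` of sizes `2` and `1`. -/
def davenportMatrix (x : Matrix (Fin 3) (Fin 3) ℝ) : Matrix (Fin 4) (Fin 4) ℝ :=
  !![x 0 0 - x 1 1 - x 2 2, x 0 1 + x 1 0, x 1 2 - x 2 1, x 0 2 + x 2 0;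
    x 0 1 + x 1 0, -x 0 0 + x 1 1 - x 2 2, x 2 0 - x 0 2, x 1 2 + x 2 1;
    x 1 2 - x 2 1, x 2 0 - x 0 2, x 0 0 + x 1 1 + x 2 2, x 0 1 - x 1 0;
    x 0 2 + x 2 0, x 1 2 + x 2 1, x 0 1 - x 1 0, -x 0 0 - x 1 1 + x 2 2]

theorem det_sub_davenportMatrix (x : Matrix (Fin 3) (Fin 3) ℝ) (z : ℝ) :
    (z • 1 - davenportMatrix x).det = z ^ 4 - 2 * (x * xᵀ).trace * z ^ 2 - 8 * x.det * z +
      (x * xᵀ).trace ^ 2 - 4 * (x * xᵀ).adjugate.trace := by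
  simp [davenportMatrix, det_succ_row_zero, Fin.sum_univ_succ, trace_fin_three, adjugate_fin_three,
    mul_apply, one_apply, Fin.succAbove]
  ring

theorem exists_davenportMatrix_eq {S : Matrix (Fin 4) (Fin 4) ℝ} (hS : S.IsSymm)
    (htr : S.trace = 0) : ∃ x, davenportMatrix x = S := by
  refine ⟨!![(S 0 0 + S 2 2) / 2, (S 0 1 + S 2 3) / 2, (S 0 3 - S 1 2) / 2;
    (S 0 1 - S 2 3) / 2, (S 1 1 + S 2 2) / 2, (S 1 3 + S 0 2) / 2;
    (S 0 3 + S 1 2) / 2, (S 1 3 - S 0 2) / 2, (S 2 2 + S 3 3) / 2], ?_⟩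
  rw [trace, Fin.sum_univ_four] at htr
  simp only [diag_apply] at htr
  ext i j
  fin_cases i <;> fin_cases j <;> simp [davenportMatrix] <;>
    linarith [hS.apply 0 1, hS.apply 0 2, hS.apply 0 3, hS.apply 1 2, hS.apply 1 3, hS.apply 2 3]

theorem charpoly_fin_three {R : Type*} [CommRing R] (A : Matrix (Fin 3) (Fin 3) R) :
    A.charpoly = X ^ 3 - C A.trace * X ^ 2 + C A.adjugate.trace * X - C A.det := by
  rw [charpoly, det_fin_three, det_fin_three, trace_fin_three, trace_fin_three, adjugate_fin_three]
  simp
  ring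

theorem charpoly_mul_transpose_of_det_sub_davenportMatrix {x : Matrix (Fin 3) (Fin 3) ℝ} {a b c : ℝ}
    (h : ∀ z : ℝ, (z • 1 - davenportMatrix x).det =
      (z - (a + b + c)) * (z - (a - b - c)) * (z - (-a + b - c)) * (z - (-a - b + c))) :
    (x * xᵀ).charpoly = (X - C (a ^ 2)) * (X - C (b ^ 2)) * (X - C (c ^ 2)) := by
  simp only [det_sub_davenportMatrix] at h
  have h₀ := h 0
  have h₁ := h 1
  have h₂ := h (-1)
  have htr : (x * xᵀ).trace = a ^ 2 + b ^ 2 + c ^ 2 := by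
    linear_combination h₀ / 2 - h₁ / 4 - h₂ / 4
  have hdet : x.det = a * b * c := by linear_combination h₂ / 16 - h₁ / 16
  have hadj : (x * xᵀ).adjugate.trace = a ^ 2 * b ^ 2 + a ^ 2 * c ^ 2 + b ^ 2 * c ^ 2 := by
    rw [htr] at h₀
    linear_combination -h₀ / 4
  rw [charpoly_fin_three, htr, hadj, det_mul, det_transpose, hdet]
  simp only [map_add, map_mul, map_pow]
  ring

theorem eq_sval_map_ofReal {n : ℕ} {x : Matrix (Fin n) (Fin n) ℝ} {c : Fin n → ℝ}
    (hc : Antitone c) (hc0 : ∀ i, 0 ≤ c i)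
    (h : (x * xᵀ).charpoly = ∏ i, (X - C (c i ^ 2))) (i : Fin n) :
    c i = sval (x.map Complex.ofReal) i := by
  refine (eq_sval_iff _ c).2 ⟨hc, hc0, ?_⟩ i
  have hmap : x.map Complex.ofReal * (x.map Complex.ofReal)ᴴ =
      (x * xᵀ).map (Complex.ofRealHom : ℝ →+* ℂ) := by
    ext i j
    simp [mul_apply]
  rw [hmap, charpoly_map, h, Polynomial.map_prod]
  simp

theorem charpoly_mul_transpose_fin_two {y : Matrix (Fin 2) (Fin 2) ℝ} {a b : ℝ}
    (hsub : (y 0 0 - y 1 1) ^ 2 + (y 0 1 + y 1 0) ^ 2 = (a - b) ^ 2)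
    (hadd : (y 0 0 + y 1 1) ^ 2 + (y 0 1 - y 1 0) ^ 2 = (a + b) ^ 2) :
    (y * yᵀ).charpoly = (X - C (a ^ 2)) * (X - C (b ^ 2)) := by
  have htr : (y * yᵀ).trace = a ^ 2 + b ^ 2 := by
    simp only [trace_fin_two, mul_apply, transpose_apply, Fin.sum_univ_two]
    linear_combination hsub / 2 + hadd / 2
  have hdet : y.det = a * b := by
    rw [det_fin_two]
    linear_combination hadd / 4 - hsub / 4
  rw [charpoly_fin_two, htr, det_mul, det_transpose, hdet]
  simp only [map_add, map_mul, map_pow]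
  ring

theorem mem_coneT_of_det_sub_davenportMatrix {x : Matrix (Fin 3) (Fin 3) ℝ} {g : Fin (2 + 1) → ℝ}
    {s : Fin 2 → ℝ} {t : ℝ} (hg : Antitone g ∧ ∀ i, 0 ≤ g i) (hs : Antitone s ∧ ∀ i, 0 ≤ s i)
    (ht : 0 ≤ t)
    (hdet : ∀ z : ℝ, (z • 1 - davenportMatrix x).det =
      (z - (g 0 + g 1 + g 2)) * (z - (g 0 - g 1 - g 2)) *
        (z - (-g 0 + g 1 - g 2)) * (z - (-g 0 - g 1 + g 2)))
    (htr : davenportMatrix x 2 2 + davenportMatrix x 3 3 = 2 * t)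
    (hminor₁ : davenportMatrix x 0 0 * davenportMatrix x 1 1 - davenportMatrix x 0 1 ^ 2 =
      t ^ 2 - (s 0 - s 1) ^ 2)
    (hminor₂ : davenportMatrix x 2 2 * davenportMatrix x 3 3 - davenportMatrix x 2 3 ^ 2 =
      t ^ 2 - (s 0 + s 1) ^ 2) :
    (g, s, fun _ : Fin 1 => t) ∈ coneT 2 1 := by
  simp only [davenportMatrix, of_apply, cons_val] at htr hminor₁ hminor₂
  have hx : x 2 2 = t := by linarith
  have hX (i : Fin 3) : g i = sval (x.map Complex.ofReal) i := by
    refine eq_sval_map_ofReal hg.1 hg.2 ?_ i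
    rw [Fin.prod_univ_three]
    exact charpoly_mul_transpose_of_det_sub_davenportMatrix hdet
  have hTL (i : Fin 2) : s i = sval ((!![x 0 0, x 0 1; x 1 0, x 1 1]).map Complex.ofReal) i := by
    refine eq_sval_map_ofReal hs.1 hs.2 ?_ i
    rw [Fin.prod_univ_two]
    refine charpoly_mul_transpose_fin_two ?_ ?_ <;> simp only [of_apply, cons_val]
    · linear_combination -hminor₁ + (x 2 2 + t) * hx
    · linear_combination -hminor₂ + (x 2 2 + t) * hx
  have hBR (i : Fin 1) : t = sval ((!![x 2 2]).map Complex.ofReal) i := by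
    refine eq_sval_map_ofReal (c := fun _ => t) antitone_const (fun _ => ht) ?_ i
    simp [charpoly, vecMul, dotProduct, hx, sq]
  refine ⟨x.map Complex.ofReal, hX, ?_, ?_⟩
  · convert hTL using 3
    ext i j
    fin_cases i <;> fin_cases j <;> rfl
  · convert hBR using 3
    ext i j
    fin_cases i; fin_cases j; rfl

end Davenport

section Bordered

theorem adjugate_mul_mul_conjTranspose_of_unitary {n R : Type*} [Fintype n] [DecidableEq n]
    [CommRing R] [StarRing R] {U : Matrix n n R} (hU : U ∈ unitaryGroup n R) (A : Matrix n n R) :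
    (U * A * Uᴴ).adjugate = U * A.adjugate * Uᴴ := by
  have hdet : U.det * Uᴴ.det = 1 := by
    rw [← det_mul, show U * Uᴴ = 1 from mem_unitaryGroup_iff.1 hU, det_one]
  have hadj : Uᴴ.adjugate = Uᴴ.det • U := by
    simpa only [star_eq_conjTranspose, conjTranspose_conjTranspose] using
      adjugate_of_unitary (Unitary.star_mem hU)
  rw [adjugate_mul_distrib, adjugate_mul_distrib, adjugate_of_unitary hU, hadj, Matrix.mul_smul,
    Matrix.mul_smul, Matrix.smul_mul, smul_smul, hdet, one_smul, Matrix.mul_assoc]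

theorem det_smul_one_sub_mul_mul_conjTranspose_of_unitary {n R : Type*} [Fintype n]
    [DecidableEq n] [CommRing R] [StarRing R] {U : Matrix n n R} (hU : U ∈ unitaryGroup n R)
    (A : Matrix n n R) (z : R) : (z • 1 - U * A * Uᴴ).det = (z • 1 - A).det := by
  have hUU : U * Uᴴ = 1 := mem_unitaryGroup_iff.1 hU
  have hconj : z • 1 - U * A * Uᴴ = U * (z • 1 - A) * Uᴴ := by
    rw [Matrix.mul_sub, Matrix.sub_mul, Matrix.mul_smul, Matrix.mul_one, Matrix.smul_mul, hUU]
  rw [hconj, det_mul_right_comm, hUU, Matrix.one_mul]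

theorem exists_isSymm_bordered {U : Matrix (Fin 3) (Fin 3) ℝ} (hU : U ∈ unitaryGroup (Fin 3) ℝ)
    (μ v : Fin 3 → ℝ) (e : ℝ) :
    ∃ S : Matrix (Fin (3 + 1)) (Fin (3 + 1)) ℝ, S.IsSymm ∧
      (∀ z : ℝ, (z • 1 - S).det = (z - e) * ((z - μ 0) * (z - μ 1) * (z - μ 2)) -
        (v 0 ^ 2 * ((z - μ 1) * (z - μ 2)) + v 1 ^ 2 * ((z - μ 0) * (z - μ 2)) +
          v 2 ^ 2 * ((z - μ 0) * (z - μ 1)))) ∧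
      S.submatrix (Fin.castAdd 1) (Fin.castAdd 1) = U * diagonal μ * Uᴴ ∧
      (S.submatrix (Fin.castAdd 1) (Fin.natAdd 3) = U * of fun i (_ : Fin 1) => v i) ∧
      S 3 3 = e := by
  set N : Matrix (Fin (3 + 1)) (Fin (3 + 1)) ℝ :=
    !![μ 0, 0, 0, v 0; 0, μ 1, 0, v 1; 0, 0, μ 2, v 2; v 0, v 1, v 2, e] with hN
  set O := blockSum U (1 : Matrix (Fin 1) (Fin 1) ℝ)
  have hO : O ∈ unitaryGroup (Fin (3 + 1)) ℝ := blockSum_mem_unitaryGroup hU (one_mem _)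
  have hOH : Oᴴ = blockSum Uᴴ 1 := by rw [conjTranspose_blockSum, conjTranspose_one]
  have hNsymm : N.IsHermitian := by
    ext i j
    fin_cases i <;> fin_cases j <;> rfl
  refine ⟨O * N * Oᴴ, isHermitian_mul_mul_conjTranspose O hNsymm, fun z => ?_, ?_, ?_, ?_⟩
  · rw [det_smul_one_sub_mul_mul_conjTranspose_of_unitary hO, hN]
    simp [det_succ_row_zero, Fin.sum_univ_succ, one_apply, Fin.succAbove]
    ring
  · rw [hOH, blockSum_mul_mul_blockSum_submatrix_castAdd_castAdd]
    congr 2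
    ext i j
    fin_cases i <;> fin_cases j <;> rfl
  · rw [hOH, blockSum_mul_mul_blockSum_submatrix_castAdd_natAdd, Matrix.mul_one]
    congr 1
    ext i j
    fin_cases i <;> fin_cases j <;> rfl
  · have hBR := blockSum_mul_mul_blockSum_submatrix_natAdd_natAdd U Uᴴ 1 1 N
    rw [← hOH, Matrix.mul_one, Matrix.one_mul] at hBR
    exact congrFun (congrFun hBR 0) 0

theorem trace_mul_diagonal_mul_conjTranspose {n R : Type*} [Fintype n] [DecidableEq n]
    [CommRing R] [StarRing R] {U : Matrix n n R} (hU : U ∈ unitaryGroup n R) (μ : n → R) :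
    (U * diagonal μ * Uᴴ).trace = ∑ i, μ i := by
  rw [trace_mul_comm, ← Matrix.mul_assoc, show Uᴴ * U = 1 from mem_unitaryGroup_iff'.1 hU,
    Matrix.one_mul, trace_diagonal]

theorem mul_diagonal_mul_conjTranspose_apply_self {n : Type*} [Fintype n] [DecidableEq n]
    (U : Matrix n n ℝ) (μ : n → ℝ) (i : n) :
    (U * diagonal μ * Uᴴ) i i = ∑ j, U i j ^ 2 * μ j := by
  rw [mul_apply]
  refine Finset.sum_congr rfl fun j _ => ?_
  rw [mul_diagonal, conjTranspose_apply, star_trivial]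
  ring

theorem exists_isSymm_bordered_with_corner (μ v w : Fin 3 → ℝ) (e : ℝ) (hw : w ⬝ᵥ w = 1) :
    ∃ S : Matrix (Fin (3 + 1)) (Fin (3 + 1)) ℝ, S.IsSymm ∧
      (∀ z : ℝ, (z • 1 - S).det = (z - e) * ((z - μ 0) * (z - μ 1) * (z - μ 2)) -
        (v 0 ^ 2 * ((z - μ 1) * (z - μ 2)) + v 1 ^ 2 * ((z - μ 0) * (z - μ 2)) +
          v 2 ^ 2 * ((z - μ 0) * (z - μ 1)))) ∧
      S 0 0 + S 1 1 + S 2 2 = μ 0 + μ 1 + μ 2 ∧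
      S 0 0 * S 1 1 - S 0 1 ^ 2 =
        w 0 ^ 2 * (μ 1 * μ 2) + w 1 ^ 2 * (μ 0 * μ 2) + w 2 ^ 2 * (μ 0 * μ 1) ∧
      S 2 2 = w 0 ^ 2 * μ 0 + w 1 ^ 2 * μ 1 + w 2 ^ 2 * μ 2 ∧ S 2 3 = w ⬝ᵥ v ∧ S 3 3 = e := by
  obtain ⟨U, hU, hUw⟩ :=
    exists_mem_unitaryGroup_row_eq (s := {2}) (of fun _ : Fin 3 => w) fun i hi j hj => by
      rw [Set.mem_singleton_iff.1 hi, Set.mem_singleton_iff.1 hj, one_apply_eq]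
      simpa [mul_apply, dotProduct] using hw
  replace hUw : U 2 = w := hUw 2 rfl
  obtain ⟨S, hS, hdet, hTL, hTR, hBR⟩ := exists_isSymm_bordered hU μ v e
  have hM (i j : Fin 3) : (U * diagonal μ * Uᴴ) i j = S (i.castAdd 1) (j.castAdd 1) :=
    (congrFun (congrFun hTL i) j).symm
  have hadjμ : (diagonal μ).adjugate = diagonal ![μ 1 * μ 2, μ 0 * μ 2, μ 0 * μ 1] := by
    rw [adjugate_fin_three]
    ext i j
    fin_cases i <;> fin_cases j <;> simp
  have htr := trace_mul_diagonal_mul_conjTranspose hU μ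
  have hadj := congrFun (congrFun
    (adjugate_mul_mul_conjTranspose_of_unitary hU (diagonal μ)) 2) 2
  rw [hadjμ, mul_diagonal_mul_conjTranspose_apply_self, adjugate_fin_three, hUw,
    Fin.sum_univ_three] at hadj
  rw [trace_fin_three, Fin.sum_univ_three] at htr
  have h22 := mul_diagonal_mul_conjTranspose_apply_self U μ 2
  rw [hUw, Fin.sum_univ_three] at h22
  simp only [hM] at hadj htr h22
  refine ⟨S, hS, hdet, htr, ?_, h22, ?_, hBR⟩
  · have hsymm : S 1 0 = S 0 1 := hS.apply 0 1
    simpa [hsymm, sq, Fin.castAdd] using hadj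
  · exact (congrFun (congrFun hTR 2) 0).trans (by simp [mul_apply, hUw, dotProduct])

end Bordered

section InverseEigenvalue

theorem exists_dotProduct_self_eq_one_of_interlacing {a b c m₁ m₂ : ℝ} (hab : b < a) (hbc : c < b)
    (ha : m₁ ≤ a) (hb₁ : b ≤ m₁) (hb₂ : m₂ ≤ b) (hc : c ≤ m₂) :
    ∃ w : Fin 3 → ℝ, w ⬝ᵥ w = 1 ∧
      w 0 ^ 2 * a + w 1 ^ 2 * b + w 2 ^ 2 * c = a + b + c - m₁ - m₂ ∧
      w 0 ^ 2 * (b * c) + w 1 ^ 2 * (a * c) + w 2 ^ 2 * (a * b) = m₁ * m₂ ∧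
      w 0 ^ 2 = (a - m₁) * (a - m₂) / ((a - b) * (a - c)) ∧
      w 1 ^ 2 = (m₁ - b) * (b - m₂) / ((a - b) * (b - c)) := by
  have hab' : 0 < a - b := by linarith
  have hbc' : 0 < b - c := by linarith
  have hac' : 0 < a - c := by linarith
  have h₀ : √((a - m₁) * (a - m₂) / ((a - b) * (a - c))) ^ 2 = _ := Real.sq_sqrt
    (div_nonneg (mul_nonneg (by linarith) (by linarith)) (by positivity))
  have h₁ : √((m₁ - b) * (b - m₂) / ((a - b) * (b - c))) ^ 2 = _ := Real.sq_sqrt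
    (div_nonneg (mul_nonneg (by linarith) (by linarith)) (by positivity))
  have h₂ : √((m₁ - c) * (m₂ - c) / ((a - c) * (b - c))) ^ 2 = _ := Real.sq_sqrt
    (div_nonneg (mul_nonneg (by linarith) (by linarith)) (by positivity))
  refine ⟨![√((a - m₁) * (a - m₂) / ((a - b) * (a - c))),
    √((m₁ - b) * (b - m₂) / ((a - b) * (b - c))),
    √((m₁ - c) * (m₂ - c) / ((a - c) * (b - c)))], ?_, ?_, ?_, h₀, h₁⟩
  · rw [dotProduct, Fin.sum_univ_three]
    simp only [cons_val, ← sq, h₀, h₁, h₂]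
    field
  all_goals
    simp only [cons_val, h₀, h₁, h₂]
    field

theorem exists_sq_mul_eq_of_interlacing {a b l₁ l₂ l₃ : ℝ} (hab : b < a) (h₁ : a ≤ l₁)
    (h₂ : l₂ ≤ a) (h₂' : b ≤ l₂) (h₃ : l₃ ≤ b) :
    ∃ u v : ℝ, (∀ z, (z - (l₁ + l₂ + l₃ - a - b)) * ((z - a) * (z - b)) -
        (u ^ 2 * (z - b) + v ^ 2 * (z - a)) = (z - l₁) * (z - l₂) * (z - l₃)) ∧
      u ^ 2 = (l₁ - a) * (a - l₂) * (a - l₃) / (a - b) ∧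
      v ^ 2 = (l₁ - b) * (l₂ - b) * (b - l₃) / (a - b) := by
  have hab' : 0 < a - b := by linarith
  have hu : √((l₁ - a) * (a - l₂) * (a - l₃) / (a - b)) ^ 2 = _ := Real.sq_sqrt
    (div_nonneg (mul_nonneg (mul_nonneg (by linarith) (by linarith)) (by linarith)) hab'.le)
  have hv : √((l₁ - b) * (l₂ - b) * (b - l₃) / (a - b)) ^ 2 = _ := Real.sq_sqrt
    (div_nonneg (mul_nonneg (mul_nonneg (by linarith) (by linarith)) (by linarith)) hab'.le)
  refine ⟨_, _, fun z => ?_, hu, hv⟩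
  rw [hu, hv]
  field

variable {l₁ l₂ l₃ l₄ m₁ m₂ n₁ n₂ : ℝ}

theorem exists_mem_Icc_mul_eq_mul (hl₄₃ : l₄ < l₃) (hl₃₂ : l₃ < l₂) (hl₂₁ : l₂ ≤ l₁)
    (hm : m₂ < m₁) (hn : n₂ ≤ n₁) (hsum : m₁ + m₂ + (n₁ + n₂) = l₁ + l₂ + l₃ + l₄)
    (hm₁ : m₁ ≤ l₁) (hn₁ : n₁ ≤ l₁) (hn₂ : n₂ ≤ l₂) (hn₂' : l₄ ≤ n₂) (h₁₄ : l₁ + l₄ ≤ m₁ + n₁)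
    (h₂₄ : l₂ + l₄ ≤ m₁ + n₂) (h₃₄ : l₃ + l₄ ≤ m₂ + n₂) (h₂₃ : l₂ + l₃ ≤ m₂ + n₁) :
    ∃ k ∈ Set.Icc (max l₂ m₁) l₁,
      (l₁ - k) * (k - l₂) * (k - m₁) * (k - min l₃ m₂) =
        (k - max l₃ m₂) * (k - l₄) * ((n₁ - (k + max l₃ m₂ + l₄ - m₁ - m₂)) *
          (k + max l₃ m₂ + l₄ - m₁ - m₂ - n₂)) := by
  set p := max l₃ m₂
  set r := min l₃ m₂
  let f (k : ℝ) : ℝ := (l₁ - k) * (k - l₂) * (k - m₁) * (k - r) -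
    (k - p) * (k - l₄) * ((n₁ - (k + p + l₄ - m₁ - m₂)) * (k + p + l₄ - m₁ - m₂ - n₂))
  have hpm : m₂ ≤ p := le_max_right _ _
  have hpl : l₃ ≤ p := le_max_left _ _
  have pos {k : ℝ} (hk : max l₂ m₁ ≤ k) : 0 ≤ (k - p) * (k - l₄) := by
    have hpk : p ≤ k := max_le (by linarith [le_max_left l₂ m₁]) (by linarith [le_max_right l₂ m₁])
    exact mul_nonneg (by linarith) (by linarith)
  have left : 0 ≤ f (max l₂ m₁) := by
    have hzero : (max l₂ m₁ - l₂) * (max l₂ m₁ - m₁) = 0 := by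
      rcases max_choice l₂ m₁ with h | h <;> simp [h]
    have hd : max l₂ m₁ + p + l₄ - m₁ - m₂ ≤ n₂ := by
      rcases max_choice l₂ m₁ with h | h <;> rcases max_choice l₃ m₂ with h' | h' <;>
        simp only [p, h, h'] <;> linarith
    have := mul_nonneg (pos le_rfl) (mul_nonneg (sub_nonneg.2 (hd.trans hn)) (sub_nonneg.2 hd))
    linear_combination this - (l₁ - max l₂ m₁) * (max l₂ m₁ - r) * hzero
  have right : f l₁ ≤ 0 := by
    have hd₁ : l₁ + p + l₄ - m₁ - m₂ ≤ n₁ := by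
      rcases max_choice l₃ m₂ with h | h <;> simp only [p, h] <;> linarith
    have hd₂ : n₂ ≤ l₁ + p + l₄ - m₁ - m₂ := by linarith
    have := mul_nonneg (pos (max_le hl₂₁ hm₁))
      (mul_nonneg (sub_nonneg.2 hd₁) (sub_nonneg.2 hd₂))
    linear_combination this
  obtain ⟨k, hk, hfk⟩ := intermediate_value_Icc' (f := f) (max_le hl₂₁ hm₁)
    (Continuous.continuousOn (by fun_prop)) ⟨right, left⟩
  exact ⟨k, hk, sub_eq_zero.1 hfk⟩

-- `k`, `p`, `l₄` will be the eigenvalues of the top-left `3 × 3` corner. As `l₄` is also an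
-- eigenvalue of the whole matrix and `p` is `l₃` or `m₂`, only the eigenvector for `k` contributes
-- to the entry `(2, 3)`, and the last equation gives this entry its required square.
theorem exists_corner_spectrum (hl₄₃ : l₄ < l₃) (hl₃₂ : l₃ < l₂) (hl₂₁ : l₂ ≤ l₁)
    (hm : m₂ < m₁) (hn : n₂ ≤ n₁) (hsum : m₁ + m₂ + (n₁ + n₂) = l₁ + l₂ + l₃ + l₄)
    (hm₁ : m₁ ≤ l₁) (hm₂ : m₂ ≤ l₂) (hm₁' : l₃ ≤ m₁) (hn₁ : n₁ ≤ l₁) (hn₂ : n₂ ≤ l₂)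
    (hn₂' : l₄ ≤ n₂) (h₁₄ : l₁ + l₄ ≤ m₁ + n₁) (h₂₄ : l₂ + l₄ ≤ m₁ + n₂) (h₃₄ : l₃ + l₄ ≤ m₂ + n₂)
    (h₂₃ : l₂ + l₃ ≤ m₂ + n₁) :
    ∃ k p, l₂ ≤ k ∧ k ≤ l₁ ∧ m₁ ≤ k ∧ p < k ∧ l₃ ≤ p ∧ p ≤ l₂ ∧ m₂ ≤ p ∧ p ≤ m₁ ∧
      (p - l₃) * (p - m₂) = 0 ∧
      (l₁ - k) * (k - l₂) * (k - l₃) * (k - m₁) * (k - m₂) =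
        (n₁ - (k + p + l₄ - m₁ - m₂)) * (k + p + l₄ - m₁ - m₂ - n₂) *
          ((k - p) ^ 2 * (k - l₄)) := by
  obtain ⟨k, ⟨hk, hkl⟩, hkd⟩ := exists_mem_Icc_mul_eq_mul hl₄₃ hl₃₂ hl₂₁ hm hn hsum hm₁ hn₁ hn₂ hn₂'
    h₁₄ h₂₄ h₃₄ h₂₃
  obtain ⟨hlk, hmk⟩ := max_le_iff.1 hk
  refine ⟨k, max l₃ m₂, hlk, hkl, hmk, max_lt (hl₃₂.trans_le hlk) (hm.trans_le hmk),
    le_max_left _ _, max_le hl₃₂.le hm₂, le_max_right _ _, max_le hm₁' hm.le, ?_, ?_⟩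
  · rcases max_choice l₃ m₂ with h | h <;> simp [h]
  · have hpr : (k - max l₃ m₂) * (k - min l₃ m₂) = (k - l₃) * (k - m₂) := by
      rcases le_total l₃ m₂ with h | h <;> simp [h, mul_comm]
    linear_combination (k - max l₃ m₂) * hkd - (l₁ - k) * (k - l₂) * (k - m₁) * hpr

theorem exists_isSymm_of_spectrum_and_blocks (hl₄₃ : l₄ < l₃) (hl₃₂ : l₃ < l₂) (hl₂₁ : l₂ ≤ l₁)
    (hm : m₂ < m₁) (hn : n₂ ≤ n₁) (hsum : m₁ + m₂ + (n₁ + n₂) = l₁ + l₂ + l₃ + l₄)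
    (hm₁ : m₁ ≤ l₁) (hm₂ : m₂ ≤ l₂) (hm₁' : l₃ ≤ m₁) (hm₂' : l₄ ≤ m₂)
    (hn₁ : n₁ ≤ l₁) (hn₂ : n₂ ≤ l₂) (hn₂' : l₄ ≤ n₂) (h₁₄ : l₁ + l₄ ≤ m₁ + n₁)
    (h₂₄ : l₂ + l₄ ≤ m₁ + n₂) (h₃₄ : l₃ + l₄ ≤ m₂ + n₂) (h₂₃ : l₂ + l₃ ≤ m₂ + n₁) :
    ∃ S : Matrix (Fin 4) (Fin 4) ℝ, S.IsSymm ∧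
      (∀ z : ℝ, (z • 1 - S).det = (z - l₁) * (z - l₂) * (z - l₃) * (z - l₄)) ∧
      S 0 0 + S 1 1 = m₁ + m₂ ∧ S 0 0 * S 1 1 - S 0 1 ^ 2 = m₁ * m₂ ∧
      S 2 2 + S 3 3 = n₁ + n₂ ∧ S 2 2 * S 3 3 - S 2 3 ^ 2 = n₁ * n₂ := by
  obtain ⟨k, p, hlk, hkl, hmk, hpk, hlp, hpl, hmp, hpm, hp, hkp⟩ :=
    exists_corner_spectrum hl₄₃ hl₃₂ hl₂₁ hm hn hsum hm₁ hm₂ hm₁' hn₁ hn₂ hn₂' h₁₄ h₂₄ h₃₄ h₂₃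
  obtain ⟨u, v, hdet, hu, hv⟩ := exists_sq_mul_eq_of_interlacing hpk hkl hlk hpl hlp
  obtain ⟨w, hw, hd, hm₁₂, hw₀, hw₁⟩ := exists_dotProduct_self_eq_one_of_interlacing hpk
    (hl₄₃.trans_le hlp) hmk hpm hmp hm₂'
  obtain ⟨S, hS, hSdet, hStr, hSminor, hS₂₂, hS₂₃, hS₃₃⟩ :=
    exists_isSymm_bordered_with_corner ![k, p, l₄] ![u, v, 0] w (l₁ + l₂ + l₃ - k - p) hw
  simp only [cons_val] at hSdet hStr hSminor hS₂₂
  rw [hd] at hS₂₂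
  have hwv : w 1 * v = 0 := by
    rw [← sq_eq_zero_iff, mul_pow, hw₁, hv]
    rcases mul_eq_zero.1 hp with h | h <;> simp [h]
  have hwu : (w 0 * u) ^ 2 = (n₁ - (k + p + l₄ - m₁ - m₂)) * (k + p + l₄ - m₁ - m₂ - n₂) := by
    have hk₀ : (k - p) * (k - l₄) * (k - p) ≠ 0 :=
      mul_ne_zero (mul_ne_zero (by linarith) (by linarith)) (by linarith)
    rw [mul_pow, hw₀, hu, div_mul_div_comm, div_eq_iff hk₀]
    linear_combination hkp
  have hS₂₃' : S 2 3 = w 0 * u := by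
    rw [hS₂₃, dotProduct, Fin.sum_univ_three]
    simp [hwv]
  refine ⟨S, hS, fun z => ?_, by linarith, hSminor.trans hm₁₂, by linarith, ?_⟩
  · rw [hSdet, ← hdet]
    ring
  · rw [hS₂₂, hS₃₃, hS₂₃', hwu]
    linear_combination -(k + p + l₄ - m₁ - m₂) * hsum

end InverseEigenvalue

section Sufficiency

open Topology

variable {g : Fin (2 + 1) → ℝ} {s : Fin 2 → ℝ} {t : ℝ}

theorem mem_coneT_of_le_of_lt (hg₁ : g 1 < g 0) (hg₂ : g 2 < g 1) (hg₃ : 0 ≤ g 2)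
    (hs : s 1 < s 0) (hs₁ : 0 ≤ s 1) (ht : 0 ≤ t) (hs₀g : s 0 ≤ g 0) (hs₁g : s 1 ≤ g 1)
    (hg₂s : g 2 ≤ s 0) (hppp : s 0 + s 1 + t ≤ g 0 + g 1 + g 2)
    (hppm : s 0 + s 1 - t ≤ g 0 + g 1 - g 2) (hppm' : s 0 - s 1 + t ≤ g 0 + g 1 - g 2)
    (hpmp : -s 0 + s 1 + t ≤ g 0 - g 1 + g 2) (hpmm : -s 0 + s 1 - t ≤ g 0 - g 1 - g 2)
    (hpmm' : -s 0 - s 1 + t ≤ g 0 - g 1 - g 2) :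
    (g, s, fun _ : Fin 1 => t) ∈ coneT 2 1 := by
  obtain ⟨S, hS, hdet, htrA, hA, htrD, hD⟩ :=
    exists_isSymm_of_spectrum_and_blocks (l₁ := g 0 + g 1 + g 2) (l₂ := g 0 - g 1 - g 2)
      (l₃ := -g 0 + g 1 - g 2) (l₄ := -g 0 - g 1 + g 2) (m₁ := -t + s 0 - s 1)
      (m₂ := -t - s 0 + s 1) (n₁ := t + s 0 + s 1) (n₂ := t - s 0 - s 1)
      (by linarith) (by linarith) (by linarith) (by linarith) (by linarith) (by linarith)
      (by linarith) (by linarith) (by linarith) (by linarith) (by linarith) (by linarith)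
      (by linarith) (by linarith) (by linarith) (by linarith) (by linarith)
  obtain ⟨x, rfl⟩ := exists_davenportMatrix_eq hS (by
    rw [trace, Fin.sum_univ_four]
    simp only [diag_apply]
    linarith)
  refine mem_coneT_of_det_sub_davenportMatrix ⟨?_, ?_⟩ ⟨?_, ?_⟩ ht hdet (by linarith) (by linarith)
    (by linarith)
  · exact Fin.antitone_iff_succ_le.2 (Fin.forall_fin_two.2 ⟨hg₁.le, hg₂.le⟩)
  · exact fun i => by fin_cases i <;> simp <;> linarith
  · exact Fin.antitone_iff_succ_le.2 (Fin.forall_fin_one.2 hs.le)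
  · exact Fin.forall_fin_two.2 ⟨hs₁.trans hs.le, hs₁⟩

theorem mem_coneT_of_le (hg₁ : g 1 ≤ g 0) (hg₂ : g 2 ≤ g 1) (hg₃ : 0 ≤ g 2)
    (hs : s 1 ≤ s 0) (hs₁ : 0 ≤ s 1) (ht : 0 ≤ t) (hs₀g : s 0 ≤ g 0) (hs₁g : s 1 ≤ g 1)
    (hg₂s : g 2 ≤ s 0) (hppp : s 0 + s 1 + t ≤ g 0 + g 1 + g 2)
    (hppm : s 0 + s 1 - t ≤ g 0 + g 1 - g 2) (hppm' : s 0 - s 1 + t ≤ g 0 + g 1 - g 2)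
    (hpmp : -s 0 + s 1 + t ≤ g 0 - g 1 + g 2) (hpmm : -s 0 + s 1 - t ≤ g 0 - g 1 - g 2)
    (hpmm' : -s 0 - s 1 + t ≤ g 0 - g 1 - g 2) :
    (g, s, fun _ : Fin 1 => t) ∈ coneT 2 1 := by
  let path (ε : ℝ) : (Fin (2 + 1) → ℝ) × (Fin 2 → ℝ) × (Fin 1 → ℝ) :=
    (g + ε • ![2, 1, 0], s + ε • ![1, 0], fun _ => t)
  have hpath : Filter.Tendsto path (𝓝[>] 0) (𝓝 (path 0)) :=
    (Continuous.tendsto (by fun_prop) 0).mono_left nhdsWithin_le_nhds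
  have hmem : path 0 ∈ coneT 2 1 := by
    refine (isClosed_coneT 2 1).mem_of_tendsto hpath (eventually_mem_nhdsWithin.mono fun ε hε => ?_)
    rw [Set.mem_Ioi] at hε
    refine mem_coneT_of_le_of_lt ?_ ?_ ?_ ?_ ?_ ht ?_ ?_ ?_ ?_ ?_ ?_ ?_ ?_ ?_ <;>
      simp only [Pi.add_apply, Pi.smul_apply, smul_eq_mul, cons_val] <;> linarith
  simpa only [path, zero_smul, add_zero] using hmem

end Sufficiency

theorem stmt_15 (g : Fin (2 + 1) → ℝ) (s : Fin 2 → ℝ) (t : ℝ)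
    (hg1 : g 0 ≥ g 1) (hg2 : g 1 ≥ g 2) (hg3 : g 2 ≥ 0)
    (hs1 : s 0 ≥ s 1) (hs2 : s 1 ≥ 0) (ht : t ≥ 0) :
    (g, s, fun _ : Fin 1 => t) ∈ coneT 2 1 ↔
      (g 0 ≥ s 0 ∧ g 0 ≥ t ∧ g 1 ≥ s 1 ∧ g 2 ≤ s 0 ∧
       g 0 + g 1 ≥ s 0 + t ∧
       g 0 + g 2 ≥ s 1 + t ∧
       g 0 - g 2 ≥ |s 1 - t| ∧
       g 0 - g 1 ≥ -s 0 + t ∧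
       g 0 + g 1 + g 2 ≥ s 0 + s 1 + t ∧
       g 0 + g 1 - g 2 ≥ s 0 - s 1 + t ∧
       g 0 + g 1 - g 2 ≥ s 0 + s 1 - t ∧
       g 0 - g 1 + g 2 ≥ -s 0 + s 1 + t ∧
       g 0 - g 1 - g 2 ≥ -s 0 + s 1 - t ∧
       g 0 - g 1 - g 2 ≥ -s 0 - s 1 + t) := by
  constructor
  · intro h
    obtain ⟨hs₀g, hs₁g, hg₂s⟩ := interlacing_of_mem_coneT h
    have hppp := sum_le_sum_of_mem_coneT h
    rw [Fin.sum_univ_two, Fin.sum_univ_one, Fin.sum_univ_three] at hppp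
    obtain ⟨hppm, hppm'⟩ := add_sub_le_of_mem_coneT h
    have hpmp := neg_add_add_le_of_mem_coneT h
    obtain ⟨hpmm, hpmm'⟩ := neg_sub_le_of_mem_coneT h
    have habs : |s 1 - t| ≤ g 0 - g 2 := abs_le.2 ⟨by linarith, by linarith⟩
    exact ⟨hs₀g, by linarith, hs₁g, hg₂s, by linarith, by linarith, habs, by linarith, hppp, hppm',
      hppm, hpmp, hpmm, hpmm'⟩
  · rintro ⟨hs₀g, -, hs₁g, hg₂s, -, -, -, -, hppp, hppm', hppm, hpmp, hpmm, hpmm'⟩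
    exact mem_coneT_of_le hg1 hg2 hg3 hs1 hs2 ht hs₀g hs₁g hg₂s hppp hppm hppm' hpmp hpmm hpmm'
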